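/- arXiv:2508.16452 — 2 statements merged into one kernel-verified Lean document; each statement's English description precedes it below -/
import Mathlib

section
/- Let K be a Galois number field with ring of integers O_K. There exists a constant C > 0 such that for every nonzero non-unit x ∈ O_K, there exists a prime ideal I ⊴ O_K of prime norm p with x ∉ I and p ≤ C · log(C · N(x)), where N(x) = [O_K : xO_K]. -/
open NumberField

/-!
Write `d = [K : ℚ]`. In a box of side `n ≍ R` of the lattice `𝓞 K`, centred at a large rational
integer, every element has norm between `R ^ d` and `(c * R) ^ d`. An ideal `I` contains a nonzero
element `x` with coordinates `O(N(I) ^ (1 / d))`, and reducing modulo the multiples of `x` gives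
every class modulo `I` a representative of that size; hence the box has
`n ^ d / N(I) + O(n ^ (d - 1) * N(I) ^ (1 / d) / N(I))` points in `I`. Summing
`log N(α) = ∑ Λ(I)`, over the ideals `I` containing `α`, over the box gives Mertens' estimate
`∑ Λ(I) / N(I) = log X + O(1)` over the ideals of norm at most `X`, the error terms being controlled
by Chebyshev's upper bound for rational primes. Comparing `X` with `X / M` for a large constant `M`
gives `X = O(ψ(X))`, and the ideals of non-prime norm contribute only `O(√X)` to `ψ(X)`. So the
product of all the prime ideals of prime norm at most `X` has norm larger than `N(J)` as soon as
`X ≥ A * log N(J) + B`, and one of them does not contain `J`.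
-/

noncomputable section

open Finset ArithmeticFunction Asymptotics Filter

section CoordinateBoxes

variable {ι M : Type*} [Fintype ι] [AddCommGroup M] (b : Module.Basis ι ℤ M)

/-- The height of an element of a finitely generated free abelian group: the largest absolute value
of its coordinates in the basis `b`. -/
def coordHeight (x : M) : ℕ := univ.sup fun i => (b.repr x i).natAbs

variable {b} in
theorem coordHeight_le_iff {x : M} {r : ℕ} :
    coordHeight b x ≤ r ↔ ∀ i, (b.repr x i).natAbs ≤ r := by
  simp only [coordHeight, Finset.sup_le_iff, mem_univ, true_imp_iff]

theorem natAbs_repr_le_coordHeight (x : M) (i : ι) : (b.repr x i).natAbs ≤ coordHeight b x :=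
  coordHeight_le_iff.1 le_rfl i

theorem coordHeight_add_le (x y : M) :
    coordHeight b (x + y) ≤ coordHeight b x + coordHeight b y := by
  refine coordHeight_le_iff.2 fun i => ?_
  rw [map_add, Finsupp.add_apply]
  exact (Int.natAbs_add_le _ _).trans
    (add_le_add (natAbs_repr_le_coordHeight b x i) (natAbs_repr_le_coordHeight b y i))

theorem coordHeight_sub_le (x y : M) :
    coordHeight b (x - y) ≤ coordHeight b x + coordHeight b y := by
  refine coordHeight_le_iff.2 fun i => ?_
  rw [map_sub, Finsupp.sub_apply]
  exact (Int.natAbs_sub_le _ _).trans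
    (add_le_add (natAbs_repr_le_coordHeight b x i) (natAbs_repr_le_coordHeight b y i))

theorem coordHeight_zsmul (n : ℤ) (x : M) :
    coordHeight b (n • x) = n.natAbs * coordHeight b x := by
  simp only [coordHeight, map_zsmul, Finsupp.smul_apply, smul_eq_mul, Int.natAbs_mul]
  exact (apply_sup_eq_sup_comp_of_linearOrder (n.natAbs * ·)
    (fun _ _ h => Nat.mul_le_mul_left _ h) (mul_zero _)).symm

open Classical in
/-- The cube of radius `R` around `z` in the lattice `M` with basis `b`. -/
def coordBox (z : M) (R : ℕ) : Finset M :=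
  (Fintype.piFinset fun _ => Icc (-(R : ℤ)) R).map
    (b.equivFun.symm.toEquiv.trans (Equiv.addLeft z)).toEmbedding

variable {b} in
theorem mem_coordBox {z x : M} {R : ℕ} : x ∈ coordBox b z R ↔ coordHeight b (x - z) ≤ R := by
  simp only [coordBox, mem_map_equiv, Equiv.symm_trans_apply, Equiv.addLeft_symm,
    Equiv.coe_addLeft, LinearEquiv.toEquiv_symm, Equiv.symm_symm, LinearEquiv.coe_toEquiv,
    Fintype.mem_piFinset, mem_Icc, coordHeight_le_iff, Module.Basis.equivFun_apply,
    neg_add_eq_sub]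
  exact forall_congr' fun i => by omega

theorem card_coordBox (z : M) (R : ℕ) : #(coordBox b z R) = (2 * R + 1) ^ Fintype.card ι := by
  classical
  rw [coordBox, card_map, Fintype.card_piFinset, prod_const, Int.card_Icc, card_univ]
  congr 1
  omega

variable {b} in
theorem add_mem_coordBox {z x y : M} {R D : ℕ} (hx : x ∈ coordBox b z R)
    (hy : coordHeight b y ≤ D) : x + y ∈ coordBox b z (R + D) := by
  rw [mem_coordBox] at hx ⊢
  rw [add_sub_right_comm]
  exact (coordHeight_add_le b _ _).trans (add_le_add hx hy)

variable {b} in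
theorem sub_mem_coordBox {z x y : M} {R D : ℕ} (hx : x ∈ coordBox b z R)
    (hy : coordHeight b y ≤ D) : x - y ∈ coordBox b z (R + D) := by
  rw [mem_coordBox] at hx ⊢
  rw [sub_right_comm]
  exact (coordHeight_sub_le b _ _).trans (add_le_add hx hy)

variable {b} {H : AddSubgroup M} [H.FiniteIndex] {D : ℕ}

open Classical in
theorem card_coordBox_inter_mul_index_le
    (hD : ∀ c : M ⧸ H, ∃ e : M, (e : M ⧸ H) = c ∧ coordHeight b e ≤ D) (z : M) (R : ℕ) :
    #{x ∈ coordBox b z R | x ∈ H} * H.index ≤ (2 * (R + D) + 1) ^ Fintype.card ι := by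
  have := Fintype.ofFinite (M ⧸ H)
  choose e he heD using hD
  rw [← card_coordBox b z, H.index_eq_card, Nat.card_eq_fintype_card, ← card_univ, ← card_product]
  refine card_le_card_of_injOn (fun p => p.1 + e p.2) ?_ ?_
  · rintro ⟨x, c⟩ hxc
    simp only [coe_product, Set.mem_prod, mem_coe, mem_filter] at hxc
    exact add_mem_coordBox hxc.1.1 (heD c)
  · rintro ⟨x, c⟩ hxc ⟨x', c'⟩ hxc' heq
    simp only [coe_product, Set.mem_prod, mem_coe, mem_filter] at hxc hxc'
    have mk_add_e : ∀ {y : M} (a : M ⧸ H), y ∈ H → ((y + e a : M) : M ⧸ H) = a := fun a hy => by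
      rw [QuotientAddGroup.mk_add, (QuotientAddGroup.eq_zero_iff _).2 hy, zero_add, he]
    obtain rfl : c = c' := by
      rw [← mk_add_e c hxc.1.2, ← mk_add_e c' hxc'.1.2]
      exact congrArg _ heq
    exact Prod.ext (add_right_cancel heq) rfl

open Classical in
theorem pow_le_card_coordBox_inter_mul_index
    (hD : ∀ c : M ⧸ H, ∃ e : M, (e : M ⧸ H) = c ∧ coordHeight b e ≤ D) (z : M) (R : ℕ) :
    (2 * R + 1) ^ Fintype.card ι ≤ #{x ∈ coordBox b z (R + D) | x ∈ H} * H.index := by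
  have := Fintype.ofFinite (M ⧸ H)
  choose e he heD using hD
  rw [← card_coordBox b z, H.index_eq_card, Nat.card_eq_fintype_card, ← card_univ, ← card_product]
  refine card_le_card_of_injOn (fun x => (x - e x, (x : M ⧸ H))) (fun x hx => ?_) ?_
  · have sub_e_mem : x - e x ∈ H := by
      rw [← QuotientAddGroup.eq_zero_iff, QuotientAddGroup.mk_sub, he, sub_self]
    simp only [coe_product, Set.mem_prod, mem_coe, mem_filter, mem_univ, and_true]
    exact ⟨sub_mem_coordBox hx (heD x), sub_e_mem⟩
  · intro x _ y _ heq
    obtain ⟨hsub, hmk⟩ := Prod.mk.inj heq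
    rw [hmk] at hsub
    exact sub_left_inj.1 hsub

open Classical in
theorem abs_card_coordBox_inter_mul_index_sub_le [Nonempty ι]
    (hD : ∀ c : M ⧸ H, ∃ e : M, (e : M ⧸ H) = c ∧ coordHeight b e ≤ D) (z : M) (R : ℕ) :
    |(#{x ∈ coordBox b z R | x ∈ H} * H.index : ℝ) - (2 * R + 1) ^ Fintype.card ι| ≤
      2 * D * Fintype.card ι * (2 * R + 1 + 2 * D) ^ (Fintype.card ι - 1) := by
  set d := Fintype.card ι
  have hd : d ≠ 0 := Fintype.card_ne_zero
  have hR : (0 : ℝ) ≤ R := R.cast_nonneg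
  have hD₀ : (0 : ℝ) ≤ D := D.cast_nonneg
  have hbase : (2 * R + 1 : ℝ) ^ (d - 1) ≤ (2 * R + 1 + 2 * D) ^ (d - 1) :=
    pow_le_pow_left₀ (by positivity) (by linarith) _
  rw [abs_le', neg_sub]
  constructor
  · have hupper : (#{x ∈ coordBox b z R | x ∈ H} * H.index : ℝ) ≤ (2 * (R + D) + 1) ^ d := by
      exact_mod_cast card_coordBox_inter_mul_index_le hD z R
    have hpow := (le_abs_self _).trans (abs_pow_sub_pow_le (2 * (R + D) + 1 : ℝ) (2 * R + 1) d)
    rw [abs_of_nonneg (by linarith), abs_of_nonneg (by linarith), abs_of_nonneg (by linarith),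
      max_eq_left (by linarith)] at hpow
    calc _ ≤ _ := sub_le_sub_right hupper _
      _ ≤ _ := hpow
      _ = _ := by ring_nf
  obtain hDR | hRD := le_or_gt D R
  · have hlower : (2 * (R - D) + 1 : ℝ) ^ d ≤ #{x ∈ coordBox b z R | x ∈ H} * H.index := by
      have h := pow_le_card_coordBox_inter_mul_index hD z (R - D)
      rw [Nat.sub_add_cancel hDR] at h
      rw [← Nat.cast_sub hDR]
      exact_mod_cast h
    have hDR' : (D : ℝ) ≤ R := by exact_mod_cast hDR
    have hpow := (le_abs_self _).trans (abs_pow_sub_pow_le (2 * R + 1 : ℝ) (2 * (R - D) + 1) d)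
    rw [abs_of_nonneg (by linarith), abs_of_nonneg (by linarith), abs_of_nonneg (by linarith),
      max_eq_left (by linarith)] at hpow
    calc _ ≤ _ := sub_le_sub_left hlower _
      _ ≤ 2 * D * d * (2 * R + 1 : ℝ) ^ (d - 1) := hpow.trans_eq (by ring)
      _ ≤ _ := mul_le_mul_of_nonneg_left hbase (by positivity)
  · have hRD' : (R + 1 : ℝ) ≤ D := by exact_mod_cast hRD
    have hd' : (1 : ℝ) ≤ d := by exact_mod_cast Nat.one_le_iff_ne_zero.2 hd
    calc _ ≤ (2 * R + 1 : ℝ) ^ d := sub_le_self _ (by positivity)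
      _ = (2 * R + 1) * (2 * R + 1 : ℝ) ^ (d - 1) := (mul_pow_sub_one hd _).symm
      _ ≤ 2 * D * d * (2 * R + 1 + 2 * D : ℝ) ^ (d - 1) :=
        mul_le_mul (by nlinarith) hbase (by positivity) (by positivity)

theorem exists_ne_zero_mem_coordHeight_le {m : ℕ}
    (hm : H.index < (m + 1) ^ Fintype.card ι) : ∃ x ∈ H, x ≠ 0 ∧ coordHeight b x ≤ m := by
  classical
  have := Fintype.ofFinite (M ⧸ H)
  obtain ⟨v, hv, w, hw, hne, hvw⟩ := exists_ne_map_eq_of_card_lt_of_maps_to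
    (s := Fintype.piFinset fun _ : ι => Icc (0 : ℤ) m) (t := univ)
    (f := fun v => (b.equivFun.symm v : M ⧸ H))
    (by
      rw [card_univ, ← Nat.card_eq_fintype_card, ← H.index_eq_card, Fintype.card_piFinset]
      simpa using hm)
    fun _ _ => mem_univ _
  simp only [Fintype.mem_piFinset, mem_Icc] at hv hw
  refine ⟨-b.equivFun.symm v + b.equivFun.symm w, QuotientAddGroup.eq.1 hvw, ?_, ?_⟩
  · rw [neg_add_eq_sub, sub_ne_zero]
    exact fun h => hne (b.equivFun.symm.injective h.symm)
  · refine coordHeight_le_iff.2 fun i => ?_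
    rw [neg_add_eq_sub, ← map_sub, ← b.equivFun_apply, LinearEquiv.apply_symm_apply, Pi.sub_apply]
    have := hv i
    have := hw i
    omega

end CoordinateBoxes

section SmallRepresentatives

theorem finiteIndex_toAddSubgroup {ι S : Type*} [Finite ι] [CommRing S] [IsDomain S]
    (b : Module.Basis ι ℤ S) {I : Ideal S} (hI : I ≠ ⊥) : I.toAddSubgroup.FiniteIndex := by
  have := Module.Finite.of_basis b
  have := Module.Free.of_basis b
  have : Finite (S ⧸ I.toAddSubgroup) := I.finiteQuotientOfFreeOfNeBot hI
  exact AddSubgroup.finiteIndex_of_finite_quotient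

variable {ι S : Type*} [Fintype ι] [CommRing S] (b : Module.Basis ι ℤ S)

theorem exists_coordHeight_mul_le :
    ∃ C : ℕ, ∀ x y : S, coordHeight b (x * y) ≤ C * (coordHeight b x * coordHeight b y) := by
  refine ⟨∑ i, ∑ j, coordHeight b (b i * b j), fun x y => coordHeight_le_iff.2 fun k => ?_⟩
  have hxy : b.repr (x * y) k = ∑ i, ∑ j, b.repr x i * b.repr y j * b.repr (b i * b j) k := by
    conv_lhs => rw [← b.sum_repr x, ← b.sum_repr y, sum_mul_sum]
    simp only [smul_mul_smul_comm, map_sum, map_zsmul, Finsupp.finsetSum_apply,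
      Finsupp.smul_apply, smul_eq_mul]
  simp only [hxy, sum_mul]
  refine (Int.natAbs_sum_le _ _).trans (sum_le_sum fun i _ => ?_)
  refine (Int.natAbs_sum_le _ _).trans (sum_le_sum fun j _ => ?_)
  rw [Int.natAbs_mul, Int.natAbs_mul, mul_comm]
  gcongr <;> exact natAbs_repr_le_coordHeight b _ _

theorem exists_coordHeight_sub_mul_le [IsDomain S] :
    ∃ C : ℕ, ∀ x y : S, x ≠ 0 → ∃ q, coordHeight b (y - x * q) ≤ C * coordHeight b x := by
  obtain ⟨C, hC⟩ := exists_coordHeight_mul_le b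
  refine ⟨C, fun x y hx => ?_⟩
  have := finiteIndex_toAddSubgroup b (mt Ideal.span_singleton_eq_bot.1 hx)
  set n : ℕ := (Ideal.span {x}).toAddSubgroup.index
  have hn : 0 < n := Nat.pos_of_ne_zero AddSubgroup.FiniteIndex.index_ne_zero
  obtain ⟨x', hx'⟩ : x ∣ (n : S) := by
    rw [← Ideal.mem_span_singleton, ← Ideal.Quotient.eq_zero_iff_mem, map_natCast,
      Ideal.Quotient.index_eq_zero]
  set q : S := ∑ i, (b.repr (x' * y) i / n) • b i
  set r : S := ∑ i, (b.repr (x' * y) i % n) • b i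
  have hqr : x' * y = n • q + r := by
    conv_lhs => rw [← b.sum_repr (x' * y)]
    simp only [q, r, smul_sum, ← sum_add_distrib, ← natCast_zsmul, smul_smul, ← add_smul,
      Int.mul_ediv_add_emod]
  have hr : coordHeight b r ≤ n := coordHeight_le_iff.2 fun i => by
    rw [b.repr_sum_self]
    have := Int.emod_nonneg (b.repr (x' * y) i) (Int.natCast_pos.2 hn).ne'
    have := Int.emod_lt_of_pos (b.repr (x' * y) i) (Int.natCast_pos.2 hn)
    omega
  have hsub : (n : ℤ) • (y - x * q) = x * r := by
    rw [zsmul_eq_mul, Int.cast_natCast]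
    rw [nsmul_eq_mul] at hqr
    linear_combination y * hx' + x * hqr
  refine ⟨q, le_of_mul_le_mul_left ?_ hn⟩
  calc n * coordHeight b (y - x * q) = coordHeight b (x * r) := by
        rw [← hsub, coordHeight_zsmul, Int.natAbs_natCast]
    _ ≤ C * (coordHeight b x * n) := (hC x r).trans (by gcongr)
    _ = n * (C * coordHeight b x) := by ring

theorem exists_forall_exists_mk_eq_coordHeight_le [IsDomain S] :
    ∃ C : ℕ, ∀ I : Ideal S, I ≠ ⊥ → ∀ m : ℕ, I.toAddSubgroup.index < (m + 1) ^ Fintype.card ι →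
      ∀ a : S ⧸ I.toAddSubgroup, ∃ y : S, (y : S ⧸ I.toAddSubgroup) = a ∧
        coordHeight b y ≤ C * m := by
  obtain ⟨C, hC⟩ := exists_coordHeight_sub_mul_le b
  refine ⟨C, fun I hI m hm a => ?_⟩
  have := finiteIndex_toAddSubgroup b hI
  obtain ⟨y, rfl⟩ := QuotientAddGroup.mk_surjective a
  obtain ⟨x, hxI, hx, hxm⟩ := exists_ne_zero_mem_coordHeight_le (b := b) (H := I.toAddSubgroup) hm
  obtain ⟨q, hq⟩ := hC x y hx
  refine ⟨y - x * q, QuotientAddGroup.eq.2 ?_, hq.trans (by gcongr)⟩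
  rw [show -(y - x * q) + y = x * q by ring]
  exact I.mul_mem_right q hxI

open Classical in
theorem exists_abs_card_coordBox_inter_ideal_mul_index_sub_le [Nonempty ι] [IsDomain S] (c : ℕ) :
    ∃ A : ℝ, 0 ≤ A ∧ ∀ I : Ideal S, I ≠ ⊥ → ∀ (z : S) (R : ℕ),
      I.toAddSubgroup.index ≤ (c * R) ^ Fintype.card ι →
      |(#{x ∈ coordBox b z R | x ∈ I} * I.toAddSubgroup.index : ℝ) - (2 * R + 1) ^ Fintype.card ι| ≤
        A * (2 * R + 1) ^ (Fintype.card ι - 1) *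
          (I.toAddSubgroup.index : ℝ) ^ (Fintype.card ι : ℝ)⁻¹ := by
  obtain ⟨C, hC⟩ := exists_forall_exists_mk_eq_coordHeight_le b
  set d := Fintype.card ι
  have hd : d ≠ 0 := Fintype.card_ne_zero
  refine ⟨2 * C * d * (1 + C * c) ^ (d - 1), by positivity, fun I hI z R hIR => ?_⟩
  have := finiteIndex_toAddSubgroup b hI
  set u : ℝ := (I.toAddSubgroup.index : ℝ) ^ (d : ℝ)⁻¹
  have hu : 0 ≤ u := by positivity
  have hud : u ^ d = I.toAddSubgroup.index := Real.rpow_inv_natCast_pow (by positivity) hd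
  have hum : I.toAddSubgroup.index < (⌊u⌋₊ + 1) ^ d := by
    have : u ^ d < (⌊u⌋₊ + 1 : ℝ) ^ d := pow_lt_pow_left₀ (Nat.lt_floor_add_one u) hu hd
    rw [hud] at this
    exact_mod_cast this
  have huR : u ≤ c * R := by
    refine le_of_pow_le_pow_left₀ hd (by positivity) ?_
    rw [hud]
    exact_mod_cast hIR
  have hD : (C * ⌊u⌋₊ : ℝ) ≤ C * u := by gcongr; exact Nat.floor_le hu
  have hbase : 2 * R + 1 + 2 * (C * ⌊u⌋₊) ≤ (1 + C * c) * (2 * R + 1 : ℝ) := by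
    nlinarith [mul_le_mul_of_nonneg_left huR C.cast_nonneg (α := ℝ), C.cast_nonneg (α := ℝ),
      c.cast_nonneg (α := ℝ), mul_nonneg (C.cast_nonneg (α := ℝ)) (c.cast_nonneg (α := ℝ))]
  refine (abs_card_coordBox_inter_mul_index_sub_le (hC I hI _ hum) z R).trans ?_
  push_cast
  calc 2 * (C * ⌊u⌋₊) * d * (2 * R + 1 + 2 * (C * ⌊u⌋₊) : ℝ) ^ (d - 1)
      ≤ 2 * (C * u) * d * ((1 + C * c) * (2 * R + 1)) ^ (d - 1) := by gcongr
    _ = _ := by rw [mul_pow]; ring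

end SmallRepresentatives

section IdealVonMangoldt

theorem isPrimePow_dvd_pow_succ_mul_iff {α : Type*} [CommMonoidWithZero α] [IsCancelMulZero α]
    [Subsingleton αˣ] {p a q : α} (hp : Prime p) (ha : ¬ p ∣ a) (hq : IsPrimePow q) (v : ℕ) :
    q ∣ p ^ (v + 1) * a ↔ q ∣ p ^ v * a ∨ q = p ^ (v + 1) := by
  obtain ⟨q, k, hq, hk, rfl⟩ := hq
  constructor
  · intro h
    by_cases hqp : q = p
    · subst hqp
      have hkv : q ^ k ∣ q ^ (v + 1) := hp.pow_dvd_of_dvd_mul_right k ha h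
      obtain hlt | rfl := ((pow_dvd_pow_iff hp.ne_zero hp.not_isUnit).1 hkv).lt_or_eq
      · exact .inl (dvd_mul_of_dvd_left (pow_dvd_pow _ (Nat.lt_succ_iff.1 hlt)) _)
      · exact .inr rfl
    · have hqp' : ¬ q ∣ p ^ (v + 1) := fun h =>
        hqp (associated_iff_eq.1 ((hq.dvd_prime_iff_associated hp).1 (hq.dvd_of_dvd_pow h)))
      exact .inl (dvd_mul_of_dvd_right (hq.pow_dvd_of_dvd_mul_left k hqp' h) _)
  · rintro (h | h)
    · exact h.trans (mul_dvd_mul_right (pow_dvd_pow _ v.le_succ) a)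
    · exact h ▸ dvd_mul_right _ _

variable {S : Type*} [CommRing S] [IsDedekindDomain S]

theorem radical_pow_of_prime {P : Ideal S} (hP : Prime P) {k : ℕ} (hk : k ≠ 0) :
    (P ^ k).radical = P := by
  rw [Ideal.radical_pow P hk, (Ideal.isPrime_of_prime hP).isRadical.radical]

theorem prime_radical_of_isPrimePow {I : Ideal S} (hI : IsPrimePow I) : Prime I.radical := by
  obtain ⟨P, k, hP, hk, rfl⟩ := hI
  rwa [radical_pow_of_prime hP hk.ne']

variable [Module.Free ℤ S]

open Classical in
/-- The von Mangoldt function on the ideals of `S`: `log N(P)` at the powers of a prime ideal `P`,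
and `0` elsewhere. The prime below a prime power is recovered as its radical. -/
def idealVonMangoldt (I : Ideal S) : ℝ :=
  if IsPrimePow I then Real.log (Ideal.absNorm I.radical) else 0

theorem idealVonMangoldt_of_isPrimePow {I : Ideal S} (hI : IsPrimePow I) :
    idealVonMangoldt I = Real.log (Ideal.absNorm I.radical) := if_pos hI

theorem idealVonMangoldt_of_not_isPrimePow {I : Ideal S} (hI : ¬ IsPrimePow I) :
    idealVonMangoldt I = 0 := if_neg hI

theorem idealVonMangoldt_nonneg (I : Ideal S) : 0 ≤ idealVonMangoldt I := by
  rw [idealVonMangoldt]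
  split_ifs
  exacts [Real.log_natCast_nonneg _, le_rfl]

theorem idealVonMangoldt_pow {P : Ideal S} (hP : Prime P) {k : ℕ} (hk : k ≠ 0) :
    idealVonMangoldt (P ^ k) = Real.log (Ideal.absNorm P) := by
  rw [idealVonMangoldt_of_isPrimePow (hP.isPrimePow.pow hk), radical_pow_of_prime hP hk]

theorem idealVonMangoldt_of_prime_absNorm {I : Ideal S} (hI : (Ideal.absNorm I).Prime) :
    idealVonMangoldt I = Real.log (Ideal.absNorm I) := by
  have hbot : I ≠ ⊥ := by
    rintro rfl
    exact Nat.not_prime_zero (Ideal.absNorm_bot (S := S) ▸ hI)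
  have hprime := Ideal.prime_of_isPrime hbot (Ideal.isPrime_of_irreducible_absNorm hI)
  rw [← idealVonMangoldt_pow hprime one_ne_zero, pow_one]

variable [Module.Finite ℤ S]

theorem absNorm_pos {I : Ideal S} (hI : I ≠ ⊥) : 0 < Ideal.absNorm I :=
  Nat.pos_of_ne_zero (mt Ideal.absNorm_eq_zero_iff.1 hI)

open Classical in
theorem sum_idealVonMangoldt_of_le {I : Ideal S} (hI : I ≠ ⊥) {s : Finset (Ideal S)}
    (hs : ∀ J, I ≤ J → J ∈ s) :
    ∑ J ∈ s with I ≤ J, idealVonMangoldt J = Real.log (Ideal.absNorm I) := by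
  induction I using UniqueFactorizationMonoid.induction_on_prime with
  | h₁ => exact absurd rfl hI
  | h₂ I hunit =>
    obtain rfl := Ideal.isUnit_iff.1 hunit
    rw [Ideal.absNorm_top, Nat.cast_one, Real.log_one]
    refine sum_eq_zero fun J hJ => idealVonMangoldt_of_not_isPrimePow fun h => h.not_isUnit ?_
    exact Ideal.isUnit_iff.2 (top_le_iff.1 (mem_filter.1 hJ).2)
  | h₃ I P hI₀ hP ih =>
    obtain ⟨v, a, ha, rfl⟩ := WfDvdMonoid.max_power_factor hI₀ hP.irreducible
    rw [← mul_assoc, ← pow_succ'] at hs ⊢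
    have hmem : P ^ (v + 1) ∈ s := hs _ Ideal.mul_le_left
    have hnew : ¬ P ^ v * a ≤ P ^ (v + 1) := fun h => by
      have := hP.pow_dvd_of_dvd_mul_right _ ha (Ideal.dvd_iff_le.2 h)
      exact v.not_succ_le_self ((pow_dvd_pow_iff hP.ne_zero hP.not_isUnit).1 this)
    have hpoint (J : Ideal S) : (if P ^ (v + 1) * a ≤ J then idealVonMangoldt J else 0) =
        (if J = P ^ (v + 1) then idealVonMangoldt J else 0) +
          if P ^ v * a ≤ J then idealVonMangoldt J else 0 := by
      by_cases hJ : IsPrimePow J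
      · simp only [← Ideal.dvd_iff_le, isPrimePow_dvd_pow_succ_mul_iff hP ha hJ] at hnew ⊢
        by_cases hJP : J = P ^ (v + 1)
        · subst hJP; simp [hnew]
        · simp [hJP]
      · simp [idealVonMangoldt_of_not_isPrimePow hJ]
    have hle : P ^ (v + 1) * a ≤ P ^ v * a := Ideal.mul_mono_left (Ideal.pow_le_pow_right v.le_succ)
    rw [sum_filter, sum_congr rfl fun J _ => hpoint J, sum_add_distrib, sum_ite_eq' s,
      if_pos hmem, ← sum_filter, ih hI₀ fun J hJ => hs J (hle.trans hJ),
      idealVonMangoldt_pow hP v.succ_ne_zero, pow_succ', mul_assoc, map_mul Ideal.absNorm P,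
      Nat.cast_mul,
      Real.log_mul (Nat.cast_ne_zero.2 (absNorm_pos hP.ne_zero).ne')
        (Nat.cast_ne_zero.2 (absNorm_pos hI₀).ne')]

theorem sum_log_absNorm_le {I : Ideal S} (hI : I ≠ ⊥) {s : Finset (Ideal S)}
    (hs : ∀ P ∈ s, Prime P ∧ I ≤ P) :
    ∑ P ∈ s, Real.log (Ideal.absNorm P) ≤ Real.log (Ideal.absNorm I) := by
  have hdvd : ∏ P ∈ s, Ideal.absNorm P ∣ Ideal.absNorm I := by
    rw [← map_prod]
    exact map_dvd _ (prod_primes_dvd I (fun P hP => (hs P hP).1)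
      fun P hP => Ideal.dvd_iff_le.2 (hs P hP).2)
  have hpos (P) (hP : P ∈ s) : 0 < Ideal.absNorm P := absNorm_pos (hs P hP).1.ne_zero
  rw [← Real.log_prod fun P hP => Nat.cast_ne_zero.2 (hpos P hP).ne', ← Nat.cast_prod]
  exact Real.log_le_log (Nat.cast_pos.2 (prod_pos hpos))
    (Nat.cast_le.2 (Nat.le_of_dvd (absNorm_pos hI) hdvd))

theorem exists_absNorm_eq_prime_pow {P : Ideal S} (hP : Prime P) :
    ∃ p k : ℕ, p.Prime ∧ k ≠ 0 ∧ Ideal.absNorm P = p ^ k := by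
  have := Ideal.isPrime_of_prime hP
  have := Ideal.IsPrime.isMaximal this hP.ne_zero
  obtain ⟨p, k, hk, -, hp, h⟩ := Ideal.exists_prime_and_absNorm_eq_pow P
  exact ⟨p, k, hp, hk.ne', h⟩

theorem radical_injOn_isPrimePow_absNorm_eq (n : ℕ) :
    Set.InjOn Ideal.radical {I : Ideal S | IsPrimePow I ∧ Ideal.absNorm I = n} := by
  rintro _ ⟨⟨P, k, hP, hk, rfl⟩, hn⟩ _ ⟨⟨Q, l, hQ, hl, rfl⟩, hn'⟩ h
  rw [radical_pow_of_prime hP hk.ne', radical_pow_of_prime hQ hl.ne'] at h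
  subst h
  rw [← hn', map_pow, map_pow] at hn
  obtain ⟨p, j, hp, hj, hPp⟩ := exists_absNorm_eq_prime_pow hP
  rw [Nat.pow_right_injective (hPp ▸ Nat.one_lt_pow hj hp.one_lt) hn]

theorem sum_idealVonMangoldt_le_of_absNorm_eq_prime_pow {p m : ℕ} (hp : p.Prime)
    {s : Finset (Ideal S)} (hs : ∀ I ∈ s, IsPrimePow I ∧ Ideal.absNorm I = p ^ m) :
    ∑ I ∈ s, idealVonMangoldt I ≤ Module.finrank ℤ S * Real.log p := by
  classical
  have hspan : Ideal.span {(p : S)} ≠ ⊥ := by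
    rw [Ne, ← Ideal.absNorm_eq_zero_iff, Ideal.absNorm_span_natCast]
    exact pow_ne_zero _ hp.ne_zero
  have hmem (I) (hI : I ∈ s) : (p : S) ∈ I.radical :=
    ⟨m, by rw [← Nat.cast_pow, ← (hs I hI).2]; exact Ideal.absNorm_mem I⟩
  calc ∑ I ∈ s, idealVonMangoldt I = ∑ I ∈ s, Real.log (Ideal.absNorm I.radical) :=
        sum_congr rfl fun I hI => idealVonMangoldt_of_isPrimePow (hs I hI).1
    _ = ∑ P ∈ s.image Ideal.radical, Real.log (Ideal.absNorm P) :=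
        (sum_image (f := fun P : Ideal S => Real.log (Ideal.absNorm P))
          ((radical_injOn_isPrimePow_absNorm_eq (p ^ m)).mono hs)).symm
    _ ≤ Real.log (Ideal.absNorm (Ideal.span {(p : S)})) := by
        refine sum_log_absNorm_le hspan (forall_mem_image.2 fun I hI => ?_)
        exact ⟨prime_radical_of_isPrimePow (hs I hI).1,
          (Ideal.span_singleton_le_iff_mem _).2 (hmem I hI)⟩
    _ = Module.finrank ℤ S * Real.log p := by
        rw [Ideal.absNorm_span_natCast, Nat.cast_pow, Real.log_pow]

theorem sum_idealVonMangoldt_le_of_absNorm_eq {n : ℕ} {s : Finset (Ideal S)}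
    (hs : ∀ I ∈ s, Ideal.absNorm I = n) :
    ∑ I ∈ s, idealVonMangoldt I ≤ Module.finrank ℤ S * Λ n := by
  classical
  rw [← sum_filter_add_sum_filter_not s IsPrimePow, sum_eq_zero (s := {I ∈ s | ¬ IsPrimePow I})
    fun I hI => idealVonMangoldt_of_not_isPrimePow (mem_filter.1 hI).2, add_zero]
  obtain hempty | ⟨I, hI⟩ := {I ∈ s | IsPrimePow I}.eq_empty_or_nonempty
  · rw [hempty, sum_empty]
    exact mul_nonneg (Nat.cast_nonneg _) vonMangoldt_nonneg
  obtain ⟨his, P, k, hP, hk, rfl⟩ := mem_filter.1 hI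
  obtain ⟨p, j, hp, hj, hPp⟩ := exists_absNorm_eq_prime_pow hP
  obtain rfl : n = p ^ (j * k) := by rw [← hs _ his, map_pow, hPp, pow_mul]
  rw [vonMangoldt_apply_pow (mul_ne_zero hj hk.ne'), vonMangoldt_apply_prime hp]
  exact sum_idealVonMangoldt_le_of_absNorm_eq_prime_pow hp fun J hJ =>
    ⟨(mem_filter.1 hJ).2, hs J (mem_filter.1 hJ).1⟩

variable [CharZero S]

variable (S) in
/-- The nonzero ideals of norm at most `X`. -/
def idealsOfNormLE (X : ℕ) : Finset (Ideal S) :=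
  ((Ideal.finite_setOfPred_absNorm_le X).subset (t := {I : Ideal S | I ≠ ⊥ ∧ Ideal.absNorm I ≤ X})
    fun _ hI => hI.2).toFinset

theorem mem_idealsOfNormLE {X : ℕ} {I : Ideal S} :
    I ∈ idealsOfNormLE S X ↔ I ≠ ⊥ ∧ Ideal.absNorm I ≤ X := by
  rw [idealsOfNormLE, Set.Finite.mem_toFinset, Set.mem_ofPred_eq]

theorem idealsOfNormLE_mono : Monotone (idealsOfNormLE S) := fun _ _ h I hI => by
  rw [mem_idealsOfNormLE] at hI ⊢
  exact ⟨hI.1, hI.2.trans h⟩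

theorem sum_idealVonMangoldt_mul_le (X : ℕ) {g : ℕ → ℝ} (hg : ∀ n, 0 ≤ g n) :
    ∑ I ∈ idealsOfNormLE S X, idealVonMangoldt I * g (Ideal.absNorm I) ≤
      Module.finrank ℤ S * ∑ n ∈ Ioc 0 X, Λ n * g n := by
  have hmaps : ∀ I ∈ idealsOfNormLE S X, Ideal.absNorm I ∈ Ioc 0 X := fun I hI => by
    rw [mem_idealsOfNormLE] at hI
    exact mem_Ioc.2 ⟨absNorm_pos hI.1, hI.2⟩
  rw [← sum_fiberwise_of_maps_to hmaps, mul_sum]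
  refine sum_le_sum fun n _ => ?_
  calc ∑ I ∈ idealsOfNormLE S X with Ideal.absNorm I = n, idealVonMangoldt I * g (Ideal.absNorm I)
      = (∑ I ∈ idealsOfNormLE S X with Ideal.absNorm I = n, idealVonMangoldt I) * g n := by
        rw [sum_mul]
        exact sum_congr rfl fun I hI => by rw [(mem_filter.1 hI).2]
    _ ≤ Module.finrank ℤ S * Λ n * g n := by
        gcongr
        · exact hg n
        · exact sum_idealVonMangoldt_le_of_absNorm_eq fun I hI => (mem_filter.1 hI).2
    _ = _ := mul_assoc _ _ _

end IdealVonMangoldt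

section WeightedChebyshev

variable {s : ℝ}

theorem sum_Ioc_half_vonMangoldt_mul_rpow_div_le (hs : 0 ≤ s) (X : ℕ) :
    ∑ n ∈ Ioc (X / 2) X, Λ n * ((n : ℝ) ^ s / n) ≤ 2 * (Real.log 4 + 4) * (X : ℝ) ^ s := by
  obtain rfl | hX := X.eq_zero_or_pos
  · simp only [Nat.zero_div, Ioc_self, sum_empty]
    positivity
  have hX' : (0 : ℝ) < X := Nat.cast_pos.2 hX
  have hpsi : ∑ n ∈ Ioc (X / 2) X, Λ n ≤ (Real.log 4 + 4) * X := by
    refine le_trans ?_ (Chebyshev.psi_le_const_mul_self hX'.le)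
    rw [Chebyshev.psi, Nat.floor_natCast]
    exact sum_le_sum_of_subset_of_nonneg (Ioc_subset_Ioc_left (Nat.zero_le _))
      fun _ _ _ => vonMangoldt_nonneg
  calc ∑ n ∈ Ioc (X / 2) X, Λ n * ((n : ℝ) ^ s / n)
      ≤ ∑ n ∈ Ioc (X / 2) X, Λ n * ((X : ℝ) ^ s / (X / 2)) := by
        refine sum_le_sum fun n hn => mul_le_mul_of_nonneg_left ?_ vonMangoldt_nonneg
        rw [mem_Ioc] at hn
        have hXn : (X : ℝ) ≤ 2 * n := by exact_mod_cast (by omega : X ≤ 2 * n)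
        have hnX : (n : ℝ) ≤ X := Nat.cast_le.2 hn.2
        gcongr
        linarith
    _ = (∑ n ∈ Ioc (X / 2) X, Λ n) * ((X : ℝ) ^ s / (X / 2)) := (sum_mul _ _ _).symm
    _ ≤ (Real.log 4 + 4) * X * ((X : ℝ) ^ s / (X / 2)) := by gcongr
    _ = 2 * (Real.log 4 + 4) * (X : ℝ) ^ s := by field_simp

theorem exists_sum_vonMangoldt_mul_rpow_div_le (hs : 0 < s) :
    ∃ C : ℝ, 0 < C ∧ ∀ X : ℕ, ∑ n ∈ Ioc 0 X, Λ n * ((n : ℝ) ^ s / n) ≤ C * (X : ℝ) ^ s := by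
  set c : ℝ := 2 * (Real.log 4 + 4)
  set t : ℝ := 2⁻¹ ^ s
  have ht : 0 < 1 - t := sub_pos.2 (Real.rpow_lt_one (by norm_num) (by norm_num) hs)
  refine ⟨c / (1 - t), by positivity, fun X => ?_⟩
  induction X using Nat.strong_induction_on with
  | _ X ih =>
    obtain rfl | hX := X.eq_zero_or_pos
    · simp only [Ioc_self, sum_empty]
      positivity
    have hhalf : ((X / 2 : ℕ) : ℝ) ^ s ≤ t * (X : ℝ) ^ s := by
      rw [← Real.mul_rpow (by norm_num) X.cast_nonneg, inv_mul_eq_div]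
      gcongr
      exact Nat.cast_div_le
    rw [← Ioc_union_Ioc_eq_Ioc (Nat.zero_le _) (Nat.div_le_self X 2),
      sum_union (Ioc_disjoint_Ioc_of_le le_rfl)]
    calc _ ≤ c / (1 - t) * ((X / 2 : ℕ) : ℝ) ^ s + c * (X : ℝ) ^ s :=
          add_le_add (ih _ (Nat.div_lt_self hX one_lt_two))
            (sum_Ioc_half_vonMangoldt_mul_rpow_div_le hs.le X)
      _ ≤ c / (1 - t) * (t * (X : ℝ) ^ s) + c * (X : ℝ) ^ s := by gcongr
      _ = c / (1 - t) * (X : ℝ) ^ s := by field_simp; ring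

end WeightedChebyshev

section BoxNorms

theorem norm_map_le_mul_coordHeight {ι M E : Type*} [Fintype ι] [AddCommGroup M]
    [SeminormedAddCommGroup E] (b : Module.Basis ι ℤ M) (f : M →+ E) (x : M) :
    ‖f x‖ ≤ (∑ i, ‖f (b i)‖) * coordHeight b x := by
  conv_lhs => rw [← b.sum_repr x]
  rw [map_sum, sum_mul]
  refine norm_sum_le_of_le _ fun i _ => ?_
  rw [map_zsmul]
  calc _ ≤ ‖b.repr x i‖ * ‖f (b i)‖ := norm_zsmul_le _ _
    _ = ‖f (b i)‖ * (b.repr x i).natAbs := by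
        rw [Int.norm_eq_abs, ← Int.cast_abs, Nat.cast_natAbs, mul_comm]
    _ ≤ ‖f (b i)‖ * coordHeight b x := by
        gcongr
        exact natAbs_repr_le_coordHeight b x i

variable {K : Type*} [Field K] [NumberField K]

theorem absNorm_span_singleton_eq_prod_norm (α : 𝓞 K) :
    (Ideal.absNorm (Ideal.span {α}) : ℝ) = ∏ σ : K →ₐ[ℚ] ℂ, ‖σ α‖ := by
  rw [← norm_prod, ← Algebra.norm_eq_prod_embeddings ℚ ℂ, Ideal.absNorm_span_singleton,
    ← Algebra.coe_norm_int, Nat.cast_natAbs, Int.cast_abs, map_intCast, Complex.norm_intCast]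

-- The box is centred at a rational integer so large that it dominates every conjugate of
-- a vector of the box around `0`.
theorem exists_coordBox_absNorm_bounds {ι : Type*} [Fintype ι] (b : Module.Basis ι ℤ (𝓞 K)) :
    ∃ c : ℕ, 1 ≤ c ∧ ∀ R : ℕ, ∃ z : 𝓞 K, ∀ α ∈ coordBox b z R,
      R ^ Module.finrank ℚ K ≤ Ideal.absNorm (Ideal.span {α}) ∧
        Ideal.absNorm (Ideal.span {α}) ≤ (c * R) ^ Module.finrank ℚ K := by
  obtain ⟨M, hM⟩ := exists_nat_ge (1 + ∑ σ : K →ₐ[ℚ] ℂ, ∑ i, ‖σ (b i)‖)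
  have hM₁ : (1 : ℝ) ≤ M := le_trans (le_add_of_nonneg_right (by positivity)) hM
  refine ⟨2 * M, by exact_mod_cast hM₁.trans (by linarith : (M : ℝ) ≤ 2 * M), fun R =>
    ⟨((M * R : ℕ) : 𝓞 K), fun α hα => ?_⟩⟩
  set z : 𝓞 K := ((M * R : ℕ) : 𝓞 K)
  have hR : (0 : ℝ) ≤ R := R.cast_nonneg
  have hz (σ : K →ₐ[ℚ] ℂ) : ‖σ z‖ = M * R := by simp [z]
  have hsub (σ : K →ₐ[ℚ] ℂ) : ‖σ α - σ z‖ ≤ (M - 1) * R := by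
    have hσ : ∑ i, ‖σ (b i)‖ ≤ M - 1 := by
      refine (single_le_sum (f := fun τ : K →ₐ[ℚ] ℂ => ∑ i, ‖τ (b i)‖) (fun τ _ => ?_)
        (mem_univ σ)).trans (by linarith)
      positivity
    have hα' : (coordHeight b (α - z) : ℝ) ≤ R := Nat.cast_le.2 (mem_coordBox.1 hα)
    calc ‖σ α - σ z‖ = ‖(σ : K →+* ℂ).comp (algebraMap (𝓞 K) K) (α - z)‖ := by simp
      _ ≤ (∑ i, ‖σ (b i)‖) * coordHeight b (α - z) :=
          norm_map_le_mul_coordHeight b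
            ((σ : K →+* ℂ).comp (algebraMap (𝓞 K) K) : 𝓞 K →+ ℂ) (α - z)
      _ ≤ (M - 1) * R := by gcongr
  have hlower (σ : K →ₐ[ℚ] ℂ) : (R : ℝ) ≤ ‖σ α‖ := by
    have := norm_sub_norm_le (σ z) (σ α)
    rw [norm_sub_rev, hz] at this
    linarith [hsub σ]
  have hupper (σ : K →ₐ[ℚ] ℂ) : ‖σ α‖ ≤ 2 * M * R := by
    have := norm_sub_norm_le (σ α) (σ z)
    rw [hz] at this
    linarith [hsub σ]
  rw [← AlgHom.card ℚ K ℂ, ← card_univ, ← Nat.cast_le (α := ℝ), ← Nat.cast_le (α := ℝ),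
    absNorm_span_singleton_eq_prod_norm]
  push_cast
  rw [← prod_const, ← prod_const]
  exact ⟨prod_le_prod (fun _ _ => hR) fun σ _ => hlower σ,
    prod_le_prod (fun _ _ => norm_nonneg _) fun σ _ => hupper σ⟩

end BoxNorms

section Mertens

variable {S : Type*} [CommRing S] [IsDedekindDomain S] [Module.Free ℤ S] [Module.Finite ℤ S]
  [CharZero S]

variable (S) in
/-- The Mertens sum `∑ Λ(I) / N(I)` over the nonzero ideals `I` of norm at most `X`. -/
def idealMertensSum (X : ℕ) : ℝ :=
  ∑ I ∈ idealsOfNormLE S X, idealVonMangoldt I / Ideal.absNorm I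

theorem idealMertensSum_mono : Monotone (idealMertensSum S) := fun _ _ h =>
  sum_le_sum_of_subset_of_nonneg (idealsOfNormLE_mono h)
    fun I _ _ => div_nonneg (idealVonMangoldt_nonneg I) (Nat.cast_nonneg _)

open Classical in
theorem sum_log_absNorm_span_singleton_eq {X : ℕ} {s : Finset S}
    (hs : ∀ x ∈ s, x ≠ 0 ∧ Ideal.absNorm (Ideal.span {x}) ≤ X) :
    ∑ x ∈ s, Real.log (Ideal.absNorm (Ideal.span {x})) =
      ∑ I ∈ idealsOfNormLE S X, idealVonMangoldt I * #{x ∈ s | x ∈ I} := by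
  have hlog (x) (hx : x ∈ s) : Real.log (Ideal.absNorm (Ideal.span {x})) =
      ∑ I ∈ idealsOfNormLE S X, if x ∈ I then idealVonMangoldt I else 0 := by
    have hbot : Ideal.span {x} ≠ ⊥ := mt Ideal.span_singleton_eq_bot.1 (hs x hx).1
    rw [← sum_idealVonMangoldt_of_le hbot (s := idealsOfNormLE S X), sum_filter]
    · simp only [Ideal.span_singleton_le_iff_mem]
    · exact fun J hJ => mem_idealsOfNormLE.2 ⟨ne_bot_of_le_ne_bot hbot hJ, (hs x hx).2.trans' <|
        Nat.le_of_dvd (absNorm_pos hbot) (Ideal.absNorm_dvd_absNorm_of_le hJ)⟩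
  rw [sum_congr rfl hlog, sum_comm]
  refine sum_congr rfl fun I _ => ?_
  rw [← sum_filter, sum_const, nsmul_eq_mul, mul_comm]

theorem abs_sum_idealVonMangoldt_mul_sub_le {X : ℕ} {f g : Ideal S → ℝ} {V E : ℝ}
    (hf : ∀ I ∈ idealsOfNormLE S X, |f I * Ideal.absNorm I - V| ≤ E * g I) :
    |∑ I ∈ idealsOfNormLE S X, idealVonMangoldt I * f I - V * idealMertensSum S X| ≤
      E * ∑ I ∈ idealsOfNormLE S X, idealVonMangoldt I * (g I / Ideal.absNorm I) := by
  rw [idealMertensSum, mul_sum, ← sum_sub_distrib, mul_sum]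
  refine (abs_sum_le_sum_abs _ _).trans (sum_le_sum fun I hI => ?_)
  have hN : (0 : ℝ) < Ideal.absNorm I := Nat.cast_pos.2 (absNorm_pos (mem_idealsOfNormLE.1 hI).1)
  have hΛ : 0 ≤ idealVonMangoldt I / Ideal.absNorm I :=
    div_nonneg (idealVonMangoldt_nonneg I) hN.le
  calc |idealVonMangoldt I * f I - V * (idealVonMangoldt I / Ideal.absNorm I)|
      = |idealVonMangoldt I / Ideal.absNorm I * (f I * Ideal.absNorm I - V)| := by
        congr 1
        field_simp
    _ ≤ idealVonMangoldt I / Ideal.absNorm I * (E * g I) := by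
        rw [abs_mul, abs_of_nonneg hΛ]
        exact mul_le_mul_of_nonneg_left (hf I hI) hΛ
    _ = E * (idealVonMangoldt I * (g I / Ideal.absNorm I)) := by ring

open Classical in
theorem exists_abs_sum_idealVonMangoldt_mul_card_sub_le {ι : Type*} [Fintype ι] [Nonempty ι]
    (b : Module.Basis ι ℤ S) (c : ℕ) :
    ∃ A : ℝ, ∀ (z : S) (R : ℕ),
      |∑ I ∈ idealsOfNormLE S ((c * R) ^ Fintype.card ι),
          idealVonMangoldt I * #{x ∈ coordBox b z R | x ∈ I} -
        (2 * R + 1) ^ Fintype.card ι * idealMertensSum S ((c * R) ^ Fintype.card ι)| ≤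
      A * (2 * R + 1) ^ Fintype.card ι := by
  obtain ⟨A, hA₀, hA⟩ := exists_abs_card_coordBox_inter_ideal_mul_index_sub_le b c
  set d := Fintype.card ι
  have hd : d ≠ 0 := Fintype.card_ne_zero
  obtain ⟨C, hC₀, hC⟩ := exists_sum_vonMangoldt_mul_rpow_div_le (s := (d : ℝ)⁻¹) (by positivity)
  refine ⟨A * d * C * c, fun z R => ?_⟩
  set X := (c * R) ^ d
  set n : ℝ := 2 * R + 1
  have hRn : (R : ℝ) ≤ n := by linarith [R.cast_nonneg (α := ℝ)]
  have hX : (X : ℝ) ^ (d : ℝ)⁻¹ = c * R := by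
    rw [Nat.cast_pow, Nat.cast_mul]
    exact Real.pow_rpow_inv_natCast (by positivity) hd
  calc _ ≤ A * n ^ (d - 1) * ∑ I ∈ idealsOfNormLE S X,
          idealVonMangoldt I * ((Ideal.absNorm I : ℝ) ^ (d : ℝ)⁻¹ / Ideal.absNorm I) :=
        abs_sum_idealVonMangoldt_mul_sub_le
          (g := fun I => (Ideal.absNorm I : ℝ) ^ (d : ℝ)⁻¹) fun I hI =>
            hA I (mem_idealsOfNormLE.1 hI).1 z R (mem_idealsOfNormLE.1 hI).2
    _ ≤ A * n ^ (d - 1) * (d * (C * (c * n))) := by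
        refine mul_le_mul_of_nonneg_left ?_ (by positivity)
        refine (sum_idealVonMangoldt_mul_le X (g := fun k => (k : ℝ) ^ (d : ℝ)⁻¹ / k)
          fun k => by positivity).trans ?_
        rw [Module.finrank_eq_card_basis b]
        grw [hC X, hX, hRn]
    _ = A * d * C * c * n ^ d := by
        rw [← mul_pow_sub_one hd n]
        ring

variable {K : Type*} [Field K] [NumberField K]

theorem exists_abs_sum_log_absNorm_span_singleton_sub_le {ι : Type*} [Fintype ι]
    (b : Module.Basis ι ℤ (𝓞 K)) :
    ∃ c : ℕ, 1 ≤ c ∧ ∀ R : ℕ, 1 ≤ R → ∃ z : 𝓞 K,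
      (∀ α ∈ coordBox b z R,
        α ≠ 0 ∧ Ideal.absNorm (Ideal.span {α}) ≤ (c * R) ^ Module.finrank ℚ K) ∧
      |∑ α ∈ coordBox b z R, Real.log (Ideal.absNorm (Ideal.span {α})) -
          #(coordBox b z R) * (Module.finrank ℚ K * Real.log R)| ≤
        #(coordBox b z R) * (Module.finrank ℚ K * Real.log c) := by
  obtain ⟨c, hc, hbox⟩ := exists_coordBox_absNorm_bounds b
  refine ⟨c, hc, fun R hR => ?_⟩
  obtain ⟨z, hz⟩ := hbox R
  have hpos (α) (hα : α ∈ coordBox b z R) : 0 < Ideal.absNorm (Ideal.span {α}) :=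
    (Nat.pow_pos hR).trans_le (hz α hα).1
  refine ⟨z, fun α hα => ⟨by rintro rfl; simpa using hpos 0 hα, (hz α hα).2⟩, ?_⟩
  rw [← nsmul_eq_mul #_, ← nsmul_eq_mul #_, ← sum_const, ← sum_const, ← sum_sub_distrib]
  refine (abs_sum_le_sum_abs _ _).trans (sum_le_sum fun α hα => ?_)
  have hlower : Module.finrank ℚ K * Real.log R ≤ Real.log (Ideal.absNorm (Ideal.span {α})) := by
    rw [← Real.log_pow]
    exact Real.log_le_log (by positivity) (by exact_mod_cast (hz α hα).1)
  have hupper : Real.log (Ideal.absNorm (Ideal.span {α})) ≤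
      Module.finrank ℚ K * Real.log c + Module.finrank ℚ K * Real.log R := by
    rw [← mul_add, ← Real.log_mul (by positivity) (by positivity), ← Real.log_pow]
    exact Real.log_le_log (Nat.cast_pos.2 (hpos α hα)) (by exact_mod_cast (hz α hα).2)
  rw [abs_of_nonneg (sub_nonneg.2 hlower)]
  exact sub_le_iff_le_add.2 hupper

variable (K)

theorem exists_abs_idealMertensSum_pow_sub_log_le :
    ∃ c : ℕ, 1 ≤ c ∧ ∃ A : ℝ, ∀ R : ℕ, 1 ≤ R →
      |idealMertensSum (𝓞 K) ((c * R) ^ Module.finrank ℚ K) - Module.finrank ℚ K * Real.log R| ≤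
        A := by
  set b := RingOfIntegers.basis K
  set d := Module.finrank ℚ K
  have hcard : Fintype.card (Module.Free.ChooseBasisIndex ℤ (𝓞 K)) = d := by
    rw [← Module.finrank_eq_card_chooseBasisIndex, RingOfIntegers.rank]
  have : Nonempty (Module.Free.ChooseBasisIndex ℤ (𝓞 K)) :=
    Fintype.card_pos_iff.1 (hcard ▸ Module.finrank_pos)
  obtain ⟨c, hc, hlog⟩ := exists_abs_sum_log_absNorm_span_singleton_sub_le b
  obtain ⟨A, hA⟩ := exists_abs_sum_idealVonMangoldt_mul_card_sub_le b c
  refine ⟨c, hc, A + d * Real.log c, fun R hR => ?_⟩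
  obtain ⟨z, hz, hlogz⟩ := hlog R hR
  have hcount := hA z R
  rw [hcard, ← sum_log_absNorm_span_singleton_eq hz, abs_sub_comm] at hcount
  rw [card_coordBox, hcard] at hlogz
  push_cast at hlogz
  set n : ℝ := (2 * R + 1) ^ d
  have hn : 0 < n := by positivity
  refine le_of_mul_le_mul_left ?_ hn
  calc n * |idealMertensSum (𝓞 K) ((c * R) ^ d) - d * Real.log R|
      = |n * idealMertensSum (𝓞 K) ((c * R) ^ d) - n * (d * Real.log R)| := by
        rw [← mul_sub, abs_mul, abs_of_pos hn]
    _ ≤ A * n + n * (d * Real.log c) := (abs_sub_le _ _ _).trans (add_le_add hcount hlogz)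
    _ = n * (A + d * Real.log c) := by ring

end Mertens

section Chebyshev

theorem exists_mul_pow_le_le_two_mul_pow {c d X : ℕ} (hc : 1 ≤ c) (hd : d ≠ 0) (hX : c ^ d ≤ X) :
    ∃ R : ℕ, 1 ≤ R ∧ (c * R) ^ d ≤ X ∧ X ≤ (c * (2 * R)) ^ d := by
  have hc₀ : (0 : ℝ) < c := Nat.cast_pos.2 hc
  set u : ℝ := (X : ℝ) ^ (d : ℝ)⁻¹
  have hud : u ^ d = X := Real.rpow_inv_natCast_pow X.cast_nonneg hd
  have hcu : (c : ℝ) ≤ u := by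
    refine le_of_pow_le_pow_left₀ hd (by positivity) ?_
    rw [hud]
    exact_mod_cast hX
  have hR : 1 ≤ ⌊u / c⌋₊ := (Nat.one_le_floor_iff _).2 ((one_le_div hc₀).2 hcu)
  have hR' : (1 : ℝ) ≤ ⌊u / c⌋₊ := Nat.one_le_cast.2 hR
  have hRu : c * ⌊u / c⌋₊ ≤ u := by
    rw [mul_comm, ← le_div_iff₀ hc₀]
    exact Nat.floor_le (by positivity)
  have huR : u ≤ c * (2 * ⌊u / c⌋₊) := by
    rw [mul_comm, ← div_le_iff₀ hc₀]
    linarith [Nat.lt_floor_add_one (u / c)]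
  refine ⟨⌊u / c⌋₊, hR, ?_, ?_⟩ <;>
  · rw [← Nat.cast_le (α := ℝ), ← hud]
    push_cast
    gcongr

theorem sub_log_isBigO_one_of_pow {F : ℕ → ℝ} (hF : Monotone F) {c d : ℕ} (hc : 1 ≤ c)
    (hd : d ≠ 0) {A : ℝ} (h : ∀ R : ℕ, 1 ≤ R → |F ((c * R) ^ d) - d * Real.log R| ≤ A) :
    (fun X : ℕ => F X - Real.log X) =O[atTop] (1 : ℕ → ℝ) := by
  refine .of_bound (A + d * (Real.log c + Real.log 2)) ?_
  filter_upwards [eventually_ge_atTop (c ^ d)] with X hX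
  obtain ⟨R, hR, hRX, hXR⟩ := exists_mul_pow_le_le_two_mul_pow hc hd hX
  have hlog₂ : Real.log (2 * R : ℕ) = Real.log 2 + Real.log R := by
    rw [Nat.cast_mul, Nat.cast_two, Real.log_mul two_ne_zero (by positivity)]
  have hlogX : Real.log X ≤ d * (Real.log c + Real.log (2 * R : ℕ)) := by
    rw [← Real.log_mul (by positivity) (by positivity), ← Real.log_pow]
    exact Real.log_le_log (Nat.cast_pos.2 (hRX.trans_lt' (by positivity))) (by exact_mod_cast hXR)
  have hlogR : d * (Real.log c + Real.log R) ≤ Real.log X := by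
    rw [← Real.log_mul (by positivity) (by positivity), ← Real.log_pow]
    exact Real.log_le_log (by positivity) (by exact_mod_cast hRX)
  have hlogc : 0 ≤ d * Real.log c := mul_nonneg d.cast_nonneg (Real.log_natCast_nonneg c)
  have hlower := neg_le_of_abs_le (h R hR)
  have hupper := le_of_abs_le (h (2 * R) (hR.trans (Nat.le_mul_of_pos_left R two_pos)))
  rw [hlog₂] at hlogX hupper
  simp only [Pi.one_apply, norm_one, mul_one, Real.norm_eq_abs, abs_le]
  constructor <;> linarith [hF hRX, hF hXR]

variable {S : Type*} [CommRing S] [IsDedekindDomain S] [Module.Free ℤ S] [Module.Finite ℤ S]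
  [CharZero S]

variable (S) in
/-- The Chebyshev function `ψ` of `S`: the sum of `Λ(I)` over the nonzero ideals `I` of norm at most
`X`. -/
def idealPsi (X : ℕ) : ℝ := ∑ I ∈ idealsOfNormLE S X, idealVonMangoldt I

variable (S) in
/-- The Chebyshev function `θ` of `S` restricted to ideals of degree one: the sum of `log N(I)` over
the ideals `I` whose norm is a rational prime at most `X`. -/
def idealTheta (X : ℕ) : ℝ :=
  ∑ I ∈ idealsOfNormLE S X with (Ideal.absNorm I).Prime, Real.log (Ideal.absNorm I)

theorem idealPsi_nonneg (X : ℕ) : 0 ≤ idealPsi S X :=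
  sum_nonneg fun I _ => idealVonMangoldt_nonneg I

theorem idealTheta_nonneg (X : ℕ) : 0 ≤ idealTheta S X :=
  sum_nonneg fun _ _ => Real.log_natCast_nonneg _

theorem mul_idealMertensSum_sub_div_le (X : ℕ) {M : ℕ} (hM : 0 < M) :
    X * (idealMertensSum S X - idealMertensSum S (X / M)) ≤ M * idealPsi S X := by
  classical
  have hsub := idealsOfNormLE_mono (S := S) (Nat.div_le_self X M)
  rw [idealMertensSum, idealMertensSum, ← sum_sdiff hsub, add_sub_cancel_right, idealPsi, mul_sum,
    mul_sum]
  calc _ ≤ ∑ I ∈ idealsOfNormLE S X \ idealsOfNormLE S (X / M), M * idealVonMangoldt I := by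
        refine sum_le_sum fun I hI => ?_
        rw [Finset.mem_sdiff, mem_idealsOfNormLE, mem_idealsOfNormLE, not_and, not_le] at hI
        have hN : (0 : ℝ) < Ideal.absNorm I := Nat.cast_pos.2 (absNorm_pos hI.1.1)
        have hXN : (X : ℝ) ≤ M * Ideal.absNorm I := by
          rw [mul_comm]
          exact_mod_cast ((Nat.div_lt_iff_lt_mul hM).1 (hI.2 hI.1.1)).le
        rw [mul_div_left_comm, mul_comm (M : ℝ)]
        exact mul_le_mul_of_nonneg_left ((div_le_iff₀ hN).2 hXN) (idealVonMangoldt_nonneg I)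
    _ ≤ _ := sum_le_sum_of_subset_of_nonneg sdiff_subset fun I _ _ =>
        mul_nonneg M.cast_nonneg (idealVonMangoldt_nonneg I)

theorem natCast_isBigO_idealPsi
    (h : (fun X : ℕ => idealMertensSum S X - Real.log X) =O[atTop] (1 : ℕ → ℝ)) :
    (fun X : ℕ => (X : ℝ)) =O[atTop] idealPsi S := by
  obtain ⟨A, hA⟩ := h.bound
  simp only [Pi.one_apply, norm_one, mul_one, Real.norm_eq_abs] at hA
  obtain ⟨M, hM⟩ := exists_nat_ge (Real.exp (2 * A + 1))
  have hM₀ : (0 : ℝ) < M := (Real.exp_pos _).trans_le hM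
  have hM₁ : 0 < M := Nat.cast_pos.1 hM₀
  have hlogM : 2 * A + 1 ≤ Real.log M := (Real.le_log_iff_exp_le hM₀).2 hM
  have htend := Nat.tendsto_div_const_atTop hM₁.ne'
  refine .of_bound M ?_
  filter_upwards [hA, htend.eventually hA, htend.eventually_ge_atTop 1] with X hX hXM hXM₁
  have hX₀ : (0 : ℝ) < X := Nat.cast_pos.2 (hXM₁.trans (Nat.div_le_self X M))
  have hlog : Real.log (X / M : ℕ) ≤ Real.log X - Real.log M := by
    rw [← Real.log_div hX₀.ne' hM₀.ne']
    exact Real.log_le_log (Nat.cast_pos.2 hXM₁) Nat.cast_div_le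
  have hdiff : 1 ≤ idealMertensSum S X - idealMertensSum S (X / M) := by
    linarith [neg_le_of_abs_le hX, le_of_abs_le hXM]
  rw [Real.norm_of_nonneg hX₀.le, Real.norm_of_nonneg (idealPsi_nonneg X)]
  exact (le_mul_of_one_le_right hX₀.le hdiff).trans (mul_idealMertensSum_sub_div_le X hM₁)

theorem idealPsi_sub_idealTheta_eq (X : ℕ) :
    idealPsi S X - idealTheta S X =
      ∑ I ∈ idealsOfNormLE S X with ¬ (Ideal.absNorm I).Prime, idealVonMangoldt I := by
  rw [idealPsi, ← sum_filter_add_sum_filter_not _ fun I : Ideal S => (Ideal.absNorm I).Prime,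
    idealTheta, sum_congr rfl fun I hI => idealVonMangoldt_of_prime_absNorm (mem_filter.1 hI).2,
    add_sub_cancel_left]

theorem idealPsi_sub_idealTheta_le (X : ℕ) :
    idealPsi S X - idealTheta S X ≤
      Module.finrank ℤ S * (Chebyshev.psi X - Chebyshev.theta X) := by
  have h := sum_idealVonMangoldt_mul_le (S := S) X (g := fun n => if n.Prime then 0 else 1)
    fun n => by split_ifs <;> norm_num
  rw [idealPsi_sub_idealTheta_eq, Chebyshev.psi_sub_theta_eq_sum_not_prime, Nat.floor_natCast]
  simpa only [sum_filter, ite_not, mul_ite, mul_zero, mul_one] using h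

theorem idealPsi_sub_idealTheta_isLittleO :
    (idealPsi S - idealTheta S) =o[atTop] fun X : ℕ => (X : ℝ) := by
  obtain ⟨C, hC⟩ := Chebyshev.psi_sub_theta_le_mul_sqrt
  have hsqrt : (idealPsi S - idealTheta S) =O[atTop] fun X : ℕ => √(X : ℝ) := by
    refine .of_bound (Module.finrank ℤ S * C) (.of_forall fun X => ?_)
    have hnonneg : 0 ≤ idealPsi S X - idealTheta S X := by
      rw [idealPsi_sub_idealTheta_eq]
      exact sum_nonneg fun I _ => idealVonMangoldt_nonneg I
    rw [Pi.sub_apply, Real.norm_of_nonneg hnonneg, Real.norm_of_nonneg (Real.sqrt_nonneg _),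
      mul_assoc]
    grw [idealPsi_sub_idealTheta_le, hC X]
  have htendsto : Tendsto (fun X : ℕ => ‖√(X : ℝ)‖) atTop atTop :=
    tendsto_norm_atTop_atTop.comp (Real.tendsto_sqrt_atTop.comp tendsto_natCast_atTop_atTop)
  simpa only [mul_one, Real.mul_self_sqrt (Nat.cast_nonneg _)] using
    hsqrt.mul_isLittleO ((isLittleO_one_left_iff ℝ).2 htendsto)

theorem natCast_isBigO_idealTheta
    (h : (fun X : ℕ => idealMertensSum S X - Real.log X) =O[atTop] (1 : ℕ → ℝ)) :
    (fun X : ℕ => (X : ℝ)) =O[atTop] idealTheta S := by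
  have hψ := natCast_isBigO_idealPsi h
  have hψθ : idealPsi S =O[atTop] idealTheta S := by
    simpa using ((idealPsi_sub_idealTheta_isLittleO (S := S)).trans_isBigO hψ).right_isBigO_sub
  exact hψ.trans hψθ

theorem exists_prime_absNorm_not_le {J : Ideal S} (hJ : J ≠ ⊥) {X : ℕ}
    (hX : Real.log (Ideal.absNorm J) < idealTheta S X) :
    ∃ P : Ideal S, P.IsPrime ∧ (Ideal.absNorm P).Prime ∧ Ideal.absNorm P ≤ X ∧ ¬ J ≤ P := by
  by_contra! hle
  refine hX.not_ge (sum_log_absNorm_le hJ fun P hP => ?_)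
  rw [mem_filter, mem_idealsOfNormLE] at hP
  have hPprime := Ideal.isPrime_of_irreducible_absNorm hP.2
  exact ⟨Ideal.prime_of_isPrime hP.1.1 hPprime, hle P hPprime hP.2 hP.1.2⟩

end Chebyshev

section AvoidingPrimes

variable (K : Type*) [Field K] [NumberField K]

theorem idealMertensSum_sub_log_isBigO_one :
    (fun X : ℕ => idealMertensSum (𝓞 K) X - Real.log X) =O[atTop] (1 : ℕ → ℝ) := by
  obtain ⟨c, hc, A, hA⟩ := exists_abs_idealMertensSum_pow_sub_log_le K
  exact sub_log_isBigO_one_of_pow idealMertensSum_mono hc Module.finrank_pos.ne' hA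

theorem exists_prime_absNorm_not_le_and_le_mul_log_add :
    ∃ A B : ℝ, 0 ≤ A ∧ 0 ≤ B ∧ ∀ J : Ideal (𝓞 K), J ≠ ⊥ → ∃ P : Ideal (𝓞 K),
      P.IsPrime ∧ (Ideal.absNorm P).Prime ∧ ¬ J ≤ P ∧
        Ideal.absNorm P ≤ A * Real.log (Ideal.absNorm J) + B := by
  obtain ⟨A, hA, hbound⟩ :=
    (natCast_isBigO_idealTheta (idealMertensSum_sub_log_isBigO_one K)).exists_pos
  obtain ⟨X₀, hX₀⟩ := eventually_atTop.1 hbound.bound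
  refine ⟨A, X₀ + 1, hA.le, by positivity, fun J hJ => ?_⟩
  have hlog : 0 ≤ A * Real.log (Ideal.absNorm J) := mul_nonneg hA.le (Real.log_natCast_nonneg _)
  set X := ⌊A * Real.log (Ideal.absNorm J)⌋₊ + 1 + X₀
  have hX : X ≤ A * Real.log (Ideal.absNorm J) + (X₀ + 1) := by
    push_cast [X]
    linarith [Nat.floor_le hlog]
  have hXθ : (X : ℝ) ≤ A * idealTheta (𝓞 K) X := by
    simpa [abs_of_nonneg (idealTheta_nonneg X)] using hX₀ X (Nat.le_add_left _ _)
  have hJθ : Real.log (Ideal.absNorm J) < idealTheta (𝓞 K) X := by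
    refine lt_of_mul_lt_mul_left (lt_of_lt_of_le ?_ hXθ) hA.le
    push_cast [X]
    linarith [Nat.lt_floor_add_one (A * Real.log (Ideal.absNorm J)), X₀.cast_nonneg (α := ℝ)]
  obtain ⟨P, hP, hprime, hPX, hJP⟩ := exists_prime_absNorm_not_le hJ hJθ
  exact ⟨P, hP, hprime, hJP, (Nat.cast_le.2 hPX).trans hX⟩

theorem stmt_2_general :
    ∃ C : ℝ, 0 < C ∧ ∀ J : Ideal (𝓞 K), J ≠ ⊥ →
      ∃ (p : ℕ) (I : Ideal (𝓞 K)), p.Prime ∧ I.IsPrime ∧ ¬ J ≤ I ∧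
        Ideal.absNorm I = p ∧ (p : ℝ) ≤ C * Real.log (C * (Ideal.absNorm J : ℝ)) := by
  obtain ⟨A, B, hA, hB, h⟩ := exists_prime_absNorm_not_le_and_le_mul_log_add K
  set C := Real.exp 1 + A + B
  have hC : 0 < C := by positivity
  have hlogC : 1 ≤ Real.log C := (Real.le_log_iff_exp_le hC).2 (by linarith)
  refine ⟨C, hC, fun J hJ => ?_⟩
  obtain ⟨P, hP, hprime, hJP, hle⟩ := h J hJ
  refine ⟨Ideal.absNorm P, P, hprime, hP, hJP, rfl, hle.trans ?_⟩
  have : 0 ≤ Real.log (Ideal.absNorm J) := Real.log_natCast_nonneg _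
  rw [Real.log_mul hC.ne' (Nat.cast_ne_zero.2 (absNorm_pos hJ).ne')]
  calc A * Real.log (Ideal.absNorm J) + B ≤ C * Real.log (Ideal.absNorm J) + C * 1 := by
        gcongr <;> linarith [Real.exp_pos 1]
    _ ≤ C * (Real.log C + Real.log (Ideal.absNorm J)) := by
        rw [← mul_add, add_comm (Real.log C)]
        gcongr

end AvoidingPrimes

end

/-- For the ring of integers of a Galois number field, every nonzero
non-unit `x` avoids some prime ideal of prime norm `p ≤ C·log(C·N(x))`. -/
theorem stmt_2 (K : Type*) [Field K] [NumberField K] [IsGalois ℚ K] :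
    ∃ C : ℝ, 0 < C ∧ ∀ x : 𝓞 K, x ≠ 0 → ¬ IsUnit x →
      ∃ (p : ℕ) (I : Ideal (𝓞 K)), p.Prime ∧ I.IsPrime ∧ x ∉ I ∧
        Ideal.absNorm I = p ∧
        (p : ℝ) ≤ C * Real.log (C * (Ideal.absNorm (Ideal.span {x}) : ℝ)) := by
  obtain ⟨C, hC, h⟩ := stmt_2_general K
  exact ⟨C, hC, fun x hx _ => by
    simpa only [Ideal.span_singleton_le_iff_mem] using
      h (Ideal.span {x}) (mt Ideal.span_singleton_eq_bot.1 hx)⟩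
end

section
/- Let d : ℤ → ℤ be an antisymmetric function with d(1) = 1, and let G_d be the quotient of Hall's group G₀ by the central subgroup generated by {c_i c₁^{-d(i)} : i ∈ ℤ}. Then G_d is residually finite if and only if d mod q is a periodic function for infinitely many positive integers q. -/
/-- Generators of Hall's group: the shift `t`, and `a i`, `c i` for `i : ℤ`. -/
inductive Gen where
  | t : Gen
  | a : ℤ → Gen
  | c : ℤ → Gen

/-- The commutator convention of the paper: `[x, y] = x⁻¹y⁻¹xy`. -/
def pcomm {G : Type*} [Group G] (x y : G) : G := x⁻¹ * y⁻¹ * x * y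

/-- The relations of `G_d`: those of Hall's group `G₀` together with
`c i = (c 1) ^ d i`. -/
def rels (d : ℤ → ℤ) : Set (FreeGroup Gen) :=
  (Set.range fun i : ℤ =>
    FreeGroup.of Gen.t * FreeGroup.of (Gen.a i) * (FreeGroup.of Gen.t)⁻¹ *
      (FreeGroup.of (Gen.a (i + 1)))⁻¹) ∪
  (Set.range fun i : ℤ =>
    FreeGroup.of Gen.t * FreeGroup.of (Gen.c i) * (FreeGroup.of Gen.t)⁻¹ *
      (FreeGroup.of (Gen.c i))⁻¹) ∪
  (Set.range fun p : ℤ × ℤ =>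
    pcomm (FreeGroup.of (Gen.a p.1)) (FreeGroup.of (Gen.a p.2)) *
      (FreeGroup.of (Gen.c (p.1 - p.2)))⁻¹) ∪
  (Set.range fun p : ℤ × ℤ =>
    pcomm (FreeGroup.of (Gen.c p.1)) (FreeGroup.of (Gen.a p.2))) ∪
  (Set.range fun p : ℤ × ℤ =>
    pcomm (FreeGroup.of (Gen.c p.1)) (FreeGroup.of (Gen.c p.2))) ∪
  (Set.range fun i : ℤ =>
    FreeGroup.of (Gen.c i) * ((FreeGroup.of (Gen.c 1)) ^ (d i))⁻¹)

/-- The quotient `G_d` of Hall's group. -/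
abbrev Gd (d : ℤ → ℤ) := PresentedGroup (rels d)

/-!
If `N` is a normal subgroup of finite index, let `P` and `q` be the orders of `t` and `c₁` modulo
`N`. Then `a (i + P) ≡ a i`, so `c₁ ^ d i ≡ [a i, a 0]` depends only on `i` modulo `P`: the
function `d mod q` is periodic. Since `c₁` has infinite order, `N` can be chosen to miss
`c₁ ^ n!`, and then `q > n`.

Conversely, `G_d / ⟨c₁⟩` is the lamplighter group `ℤ ≀ ℤ`, which is residually finite because a
nonzero Laurent polynomial over `ℤ` takes a nonzero value at some unit of some `𝔽_p`. If `d mod q`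
has period `P`, then `⟨eᵢ, eⱼ⟩ = d (i - j)` is a well-defined bilinear form on the free
`ℤ/q`-module with basis indexed by `ℤ/P`, and `t` acts on its finite Heisenberg group by shifting
the basis. As `d` is antisymmetric, `[eᵢ, eⱼ] = 2 d (i - j)` there, so `G_d` maps to the resulting
semidirect product with `c₁ ↦ 2`, and `c₁ ^ z` is detected as soon as `q > |2z|`. The same
construction over `ℤ` shows that `c₁` has infinite order.
-/

namespace HallGroup

section Pcomm

variable {G H : Type*} [Group G] [Group H]

theorem pcomm_eq_iff {x y z : G} : pcomm x y = z ↔ x * y = y * x * z := by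
  rw [pcomm, mul_assoc, ← mul_inv_rev, inv_mul_eq_iff_eq_mul]

theorem pcomm_eq_one_iff {x y : G} : pcomm x y = 1 ↔ Commute x y := by
  rw [pcomm_eq_iff, mul_one, Commute, SemiconjBy]

theorem map_pcomm (f : G →* H) (x y : G) : f (pcomm x y) = pcomm (f x) (f y) := by
  simp [pcomm]

end Pcomm

/-- The elements `t`, `a i`, `c` satisfy the defining relations of `G_d`, where `c` stands for
`c₁` and the other `c i` have been eliminated by `c i = c₁ ^ d i`. -/
structure IsHallTriple {G : Type*} [Group G] (d : ℤ → ℤ) (t : G) (a : ℤ → G) (c : G) : Prop where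
  semiconjBy : ∀ i, SemiconjBy t (a i) (a (i + 1))
  commute_t : Commute c t
  commute_a : ∀ i, Commute c (a i)
  pcomm_eq : ∀ i j, pcomm (a i) (a j) = c ^ d (i - j)

namespace IsHallTriple

variable {G H : Type*} [Group G] [Group H] {d : ℤ → ℤ} {t c : G} {a : ℤ → G}

theorem map (h : IsHallTriple d t a c) (f : G →* H) :
    IsHallTriple d (f t) (fun i => f (a i)) (f c) where
  semiconjBy i := (h.semiconjBy i).map f
  commute_t := h.commute_t.map f
  commute_a i := (h.commute_a i).map f
  pcomm_eq i j := by rw [← map_pcomm, h.pcomm_eq, map_zpow]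

theorem semiconjBy_zpow (h : IsHallTriple d t a c) (k i : ℤ) :
    SemiconjBy (t ^ k) (a i) (a (i + k)) := by
  induction k with
  | zero => simp
  | succ k ih =>
    rw [zpow_add_one, (Commute.self_zpow t k).symm.eq, ← add_assoc]
    exact (h.semiconjBy _).mul_left ih
  | pred k ih =>
    rw [zpow_sub_one, (Commute.self_zpow t _).symm.inv_right.eq]
    refine SemiconjBy.mul_left ?_ ih
    simpa [add_assoc] using (h.semiconjBy (i + (-k - 1))).inv_symm_left

theorem intCast_add_orderOf (h : IsHallTriple d t a c) (i : ℤ) :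
    (d (i + orderOf t) : ZMod (orderOf c)) = d i := by
  have ha : a (i + orderOf t) = a i := by
    simpa [SemiconjBy, pow_orderOf_eq_one] using (h.semiconjBy_zpow (orderOf t) i).symm
  have hc (j : ℤ) : c ^ d j = pcomm (a j) (a 0) := by rw [h.pcomm_eq, sub_zero]
  rw [ZMod.intCast_eq_intCast_iff, ← zpow_eq_zpow_iff_modEq, hc, hc, ha]

theorem commute (h : IsHallTriple d t a 1) (i j : ℤ) : Commute (a i) (a j) :=
  pcomm_eq_one_iff.mp (by rw [h.pcomm_eq, one_zpow])

theorem semidirectProduct {N K : Type*} [Group N] [Group K] {φ : K →* MulAut N} {k : K} {c : N}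
    {a : ℤ → N} (ha : ∀ i, φ k (a i) = a (i + 1)) (hc : φ k c = c)
    (hca : ∀ i, Commute c (a i)) (hcomm : ∀ i j, pcomm (a i) (a j) = c ^ d (i - j)) :
    IsHallTriple d (.inr k : N ⋊[φ] K) (fun i => .inl (a i)) (.inl c) where
  semiconjBy i := by
    rw [← ha, SemidirectProduct.inl_aut, map_inv, SemiconjBy, inv_mul_cancel_right]
  commute_t := by
    have h := SemidirectProduct.inl_aut (φ := φ) k c
    rwa [hc, map_inv, eq_mul_inv_iff_mul_eq] at h
  commute_a i := (hca i).map SemidirectProduct.inl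
  pcomm_eq i j := by rw [← map_pcomm, hcomm, map_zpow]

end IsHallTriple

section Presentation

variable {d : ℤ → ℤ}

/-- The generator `t` of `G_d`. -/
def t (d : ℤ → ℤ) : Gd d := PresentedGroup.of Gen.t

/-- The generators `a i` of `G_d`. -/
def a (d : ℤ → ℤ) (i : ℤ) : Gd d := PresentedGroup.of (Gen.a i)

/-- The central generator `c₁` of `G_d`. -/
def c (d : ℤ → ℤ) : Gd d := PresentedGroup.of (Gen.c 1)

theorem of_c (i : ℤ) : (PresentedGroup.of (Gen.c i) : Gd d) = c d ^ d i := by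
  have h := PresentedGroup.one_of_mem (rels := rels d) (.inr ⟨i, rfl⟩)
  rw [map_mul, map_inv, map_zpow] at h
  exact mul_inv_eq_one.mp h

theorem isHallTriple (d : ℤ → ℤ) : IsHallTriple d (t d) (a d) (c d) where
  semiconjBy i := by
    have h := PresentedGroup.one_of_mem (rels := rels d)
      (.inl <| .inl <| .inl <| .inl <| .inl ⟨i, rfl⟩)
    simp only [map_mul, map_inv] at h
    exact mul_inv_eq_iff_eq_mul.mp (mul_inv_eq_one.mp h)
  commute_t := by
    have h := PresentedGroup.one_of_mem (rels := rels d)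
      (.inl <| .inl <| .inl <| .inl <| .inr ⟨1, rfl⟩)
    simp only [map_mul, map_inv] at h
    exact (mul_inv_eq_iff_eq_mul.mp (mul_inv_eq_one.mp h)).symm
  commute_a i := by
    have h := PresentedGroup.one_of_mem (rels := rels d)
      (.inl <| .inl <| .inr ⟨(1, i), rfl⟩)
    rwa [map_pcomm, pcomm_eq_one_iff] at h
  pcomm_eq i j := by
    have h := PresentedGroup.one_of_mem (rels := rels d)
      (.inl <| .inl <| .inl <| .inr ⟨(i, j), rfl⟩)
    rw [map_mul, map_inv, map_pcomm, mul_inv_eq_one] at h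
    exact h.trans (of_c _)

theorem hom_ext {G : Type*} [Group G] {f g : Gd d →* G} (ht : f (t d) = g (t d))
    (ha : ∀ i, f (a d i) = g (a d i)) (hc : f (c d) = g (c d)) : f = g := by
  refine PresentedGroup.ext ?_
  rintro (_ | i | i)
  · exact ht
  · exact ha i
  · rw [of_c, map_zpow, map_zpow, hc]

theorem c_mem_center (d : ℤ → ℤ) : c d ∈ Subgroup.center (Gd d) := by
  have hconj : (MulAut.conj (c d)).toMonoidHom = MonoidHom.id (Gd d) :=
    hom_ext (mul_inv_eq_iff_eq_mul.mpr (isHallTriple d).commute_t)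
      (fun i => mul_inv_eq_iff_eq_mul.mpr ((isHallTriple d).commute_a i)) (mul_inv_cancel_right _ _)
  exact Subgroup.mem_center_iff.mpr fun g =>
    (mul_inv_eq_iff_eq_mul.mp (DFunLike.congr_fun hconj g)).symm

instance : (Subgroup.zpowers (c d)).Normal where
  conj_mem x hx g := by
    have hxg := Subgroup.mem_center_iff.mp (Subgroup.zpowers_le.mpr (c_mem_center d) hx) g
    rwa [hxg, mul_inv_cancel_right]

variable {G : Type*} [Group G] {t' c' : G} {a' : ℤ → G} (hd1 : d 1 = 1)
  (h : IsHallTriple d t' a' c')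

/-- The universal property of `G_d`: a Hall triple in `G` determines a homomorphism `G_d → G`. -/
def lift : Gd d →* G :=
  PresentedGroup.toGroup (f := fun
    | .t => t'
    | .a i => a' i
    | .c i => c' ^ d i) <| by
    rintro r (((((⟨i, rfl⟩ | ⟨i, rfl⟩) | ⟨⟨i, j⟩, rfl⟩) | ⟨⟨i, j⟩, rfl⟩) | ⟨⟨i, j⟩, rfl⟩) |
      ⟨i, rfl⟩) <;>
    simp only [map_mul, map_inv, map_zpow, map_pcomm, FreeGroup.lift_apply_of, pcomm_eq_one_iff,
      mul_inv_eq_iff_eq_mul, one_mul]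
    · exact h.semiconjBy i
    · exact (h.commute_t.zpow_left _).symm
    · exact h.pcomm_eq i j
    · exact (h.commute_a j).zpow_left _
    · exact .zpow_zpow_self c' _ _
    · rw [hd1, zpow_one]

@[simp]
theorem lift_t : lift hd1 h (t d) = t' := PresentedGroup.toGroup.of _

@[simp]
theorem lift_a (i : ℤ) : lift hd1 h (a d i) = a' i := PresentedGroup.toGroup.of _

@[simp]
theorem lift_c : lift hd1 h (c d) = c' :=
  (PresentedGroup.toGroup.of _).trans (by simp only [hd1, zpow_one])

end Presentation

section Heisenberg

/-- The Heisenberg group of a bilinear map `β : M × M → A`: the central extension of `M` by `A`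
with cocycle `β`. -/
@[ext]
structure Heisenberg {R M A : Type*} [CommRing R] [AddCommGroup M] [Module R M] [AddCommGroup A]
    [Module R A] (β : M →ₗ[R] M →ₗ[R] A) where
  base : M
  center : A

namespace Heisenberg

variable {R M A : Type*} [CommRing R] [AddCommGroup M] [Module R M] [AddCommGroup A] [Module R A]
  {β : M →ₗ[R] M →ₗ[R] A}

instance : Mul (Heisenberg β) :=
  ⟨fun g h => ⟨g.base + h.base, g.center + h.center + β g.base h.base⟩⟩

instance : One (Heisenberg β) := ⟨⟨0, 0⟩⟩

instance : Inv (Heisenberg β) := ⟨fun g => ⟨-g.base, -g.center + β g.base g.base⟩⟩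

theorem mul_def (g h : Heisenberg β) :
    g * h = ⟨g.base + h.base, g.center + h.center + β g.base h.base⟩ := rfl

theorem one_def : (1 : Heisenberg β) = ⟨0, 0⟩ := rfl

theorem inv_def (g : Heisenberg β) : g⁻¹ = ⟨-g.base, -g.center + β g.base g.base⟩ := rfl

instance : Group (Heisenberg β) :=
  Group.ofLeftAxioms
    (fun g h k => by
      simp only [mul_def, map_add, LinearMap.add_apply, Heisenberg.mk.injEq]
      constructor <;> abel)
    (fun g => by simp [mul_def, one_def])
    (fun g => by simp [mul_def, one_def, inv_def])

instance [Finite M] [Finite A] : Finite (Heisenberg β) :=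
  Finite.of_injective (fun g => (g.base, g.center)) fun _ _ h =>
    Heisenberg.ext (Prod.mk.inj h).1 (Prod.mk.inj h).2

/-- The inclusion of the central subgroup `A`. -/
def ofCenter (β : M →ₗ[R] M →ₗ[R] A) : Multiplicative A →* Heisenberg β where
  toFun z := ⟨0, z.toAdd⟩
  map_one' := rfl
  map_mul' _ _ := by simp [mul_def]

theorem ofCenter_apply (z : Multiplicative A) : ofCenter β z = ⟨0, z.toAdd⟩ := rfl

theorem ofCenter_injective : Function.Injective (ofCenter β) := fun _ _ h =>
  congrArg Heisenberg.center h

theorem commute_ofCenter (z : Multiplicative A) (g : Heisenberg β) : Commute (ofCenter β z) g := by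
  simp [Commute, SemiconjBy, ofCenter_apply, mul_def, add_comm]

theorem pcomm_mk (x y : M) (z w : A) :
    pcomm (⟨x, z⟩ : Heisenberg β) ⟨y, w⟩ = ofCenter β (.ofAdd (β x y - β y x)) := by
  rw [pcomm_eq_iff]
  simp only [mul_def, ofCenter_apply, Heisenberg.mk.injEq, toAdd_ofAdd, map_zero]
  constructor <;> abel

/-- The automorphism induced by an isometry of `β`. -/
def autOfIsometry (e : M ≃ₗ[R] M) (he : ∀ x y, β (e x) (e y) = β x y) : MulAut (Heisenberg β) where
  toFun g := ⟨e g.base, g.center⟩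
  invFun g := ⟨e.symm g.base, g.center⟩
  left_inv g := by simp
  right_inv g := by simp
  map_mul' g h := by simp [mul_def, he]

theorem autOfIsometry_apply (e : M ≃ₗ[R] M) (he : ∀ x y, β (e x) (e y) = β x y)
    (g : Heisenberg β) : autOfIsometry e he g = ⟨e g.base, g.center⟩ := rfl

end Heisenberg

variable (I R : Type*) [AddCommGroupWithOne I] [CommRing R]

/-- The translation `i ↦ i + 1` of basis vectors. -/
noncomputable def shift : (I →₀ R) ≃ₗ[R] (I →₀ R) :=
  Finsupp.domLCongr (Equiv.addRight 1)

variable {I R}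

/-- The shift-invariant bilinear form with `⟨eᵢ, eⱼ⟩ = b (i - j)`. -/
noncomputable def toeplitzForm (b : I → R) : (I →₀ R) →ₗ[R] (I →₀ R) →ₗ[R] R :=
  Finsupp.linearCombination R fun i => Finsupp.linearCombination R fun j => b (i - j)

theorem shift_single (i : I) (r : R) :
    shift I R (Finsupp.single i r) = Finsupp.single (i + 1) r := by
  simp [shift]

theorem toeplitzForm_single (b : I → R) (i j : I) :
    toeplitzForm b (Finsupp.single i 1) (Finsupp.single j 1) = b (i - j) := by
  simp [toeplitzForm]

theorem toeplitzForm_shift (b : I → R) (x y : I →₀ R) :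
    toeplitzForm b (shift I R x) (shift I R y) = toeplitzForm b x y := by
  suffices h : (toeplitzForm b).compl₁₂ (shift I R : _ →ₗ[R] _) (shift I R : _ →ₗ[R] _) =
      toeplitzForm b from LinearMap.congr_fun₂ h x y
  ext i j
  simp [shift_single, toeplitzForm_single]

theorem isHallTriple_heisenberg {d : ℤ → ℤ} (hanti : ∀ i, d (-i) = -d i) {b : I → R}
    (hb : ∀ i : ℤ, b i = d i) :
    IsHallTriple d
      (.inr (Heisenberg.autOfIsometry (shift I R) (toeplitzForm_shift b)) :
        Heisenberg (toeplitzForm b) ⋊[MonoidHom.id _] MulAut (Heisenberg (toeplitzForm b)))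
      (fun i => .inl ⟨Finsupp.single (i : I) 1, 0⟩)
      (.inl (Heisenberg.ofCenter _ (.ofAdd 2))) := by
  refine .semidirectProduct (fun i => ?_) ?_ (fun _ => Heisenberg.commute_ofCenter _ _)
    (fun i j => ?_)
  · simp [Heisenberg.autOfIsometry_apply, shift_single]
  · simp [Heisenberg.autOfIsometry_apply, Heisenberg.ofCenter_apply]
  · have hji : b (j - i) = -b (i - j) := by
      rw [← neg_sub, ← Int.cast_sub, ← Int.cast_neg, hb, hb, hanti, Int.cast_neg]
    rw [Heisenberg.pcomm_mk, ← map_zpow, ← ofAdd_zsmul, toeplitzForm_single,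
      toeplitzForm_single, hji, ← Int.cast_sub, hb, zsmul_eq_mul, sub_neg_eq_add, mul_two]

end Heisenberg

section ResiduallyFinite

variable {G H : Type*} [Group G] [Group H]

instance {φ : H →* MulAut G} [Finite G] [Finite H] : Finite (G ⋊[φ] H) :=
  Finite.of_equiv _ SemidirectProduct.equivProd.symm

theorem map_eq_one_of_forall_finiteIndex_mem [Group.ResiduallyFinite H] (f : G →* H) {g : G}
    (hg : ∀ (N : Subgroup G) [N.FiniteIndex], g ∈ N) : f g = 1 :=
  Group.eq_one_iff_forall_finiteIndexNormalSubroup _ fun K => hg (K.comap f).toSubgroup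

theorem residuallyFinite_iff_exists_normal_finiteIndex :
    Group.ResiduallyFinite G ↔
      ∀ g : G, g ≠ 1 → ∃ N : Subgroup G, N.Normal ∧ N.FiniteIndex ∧ g ∉ N := by
  rw [Group.residuallyFinite_iff_exists_finiteIndexNormalSubgroup]
  exact forall₂_congr fun g _ => ⟨fun ⟨N, hg⟩ => ⟨N.toSubgroup, N.isNormal', N.isFiniteIndex', hg⟩,
    fun ⟨N, _, _, hg⟩ => ⟨.ofSubgroup N, hg⟩⟩

end ResiduallyFinite

section Lamplighter

universe u

open LaurentPolynomial

/-- The action of the units of a ring by multiplication. -/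
def unitsMulAut (R : Type*) [Ring R] : Rˣ →* MulAut (Multiplicative R) :=
  (MulAutMultiplicative R).symm.toMonoidHom.comp AddAut.mulLeft

/-- The affine group `x ↦ u x + b` of a ring. -/
abbrev AffineGroup (R : Type*) [Ring R] := Multiplicative R ⋊[unitsMulAut R] Rˣ

namespace AffineGroup

variable {R S : Type*} [Ring R] [Ring S]

/-- The functoriality of the affine group. -/
def map (f : R →+* S) : AffineGroup R →* AffineGroup S :=
  SemidirectProduct.map f.toAddMonoidHom.toMultiplicative (Units.map f) fun u =>
    MonoidHom.ext fun x => congrArg Multiplicative.ofAdd (map_mul f (u : R) x.toAdd)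

theorem residuallyFinite {R : Type u} [Ring R]
    (hR : ∀ x : R, x ≠ 0 → ∃ (S : Type u) (_ : Ring S) (_ : Finite S) (f : R →+* S), f x ≠ 0) :
    Group.ResiduallyFinite (AffineGroup R) := by
  refine Group.residuallyFinite_of_forall_exists_finite_monoidHom fun g hg => ?_
  suffices h : ∃ (S : Type u) (_ : Ring S) (_ : Finite S) (f : R →+* S), map f g ≠ 1 from
    let ⟨S, _, _, f, hf⟩ := h; ⟨AffineGroup S, inferInstance, inferInstance, map f, hf⟩
  by_cases hu : (g.right : R) - 1 = 0
  · have hx : g.left.toAdd ≠ 0 := fun hx =>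
      hg (SemidirectProduct.ext hx (Units.ext (sub_eq_zero.mp hu)))
    obtain ⟨S, _, _, f, hf⟩ := hR _ hx
    exact ⟨S, _, ‹_›, f, fun h => hf (congrArg SemidirectProduct.left h)⟩
  · obtain ⟨S, _, _, f, hf⟩ := hR _ hu
    refine ⟨S, _, ‹_›, f, fun h => hf ?_⟩
    have hfu : f g.right = 1 := congrArg Units.val (congrArg SemidirectProduct.right h)
    rw [map_sub, hfu, map_one, sub_self]

end AffineGroup

theorem exists_prime_intCast_ne_zero {n : ℤ} (hn : n ≠ 0) :
    ∃ (p : ℕ) (_ : Fact p.Prime), (n : ZMod p) ≠ 0 := by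
  obtain ⟨p, hlt, hp⟩ := Nat.exists_infinite_primes (n.natAbs + 1)
  refine ⟨p, ⟨hp⟩, fun h => hn ?_⟩
  exact Int.eq_zero_of_dvd_of_natAbs_lt_natAbs ((ZMod.intCast_zmod_eq_zero_iff_dvd n p).mp h) hlt

theorem exists_prime_eval₂_ne_zero {x : ℤ[T;T⁻¹]} (hx : x ≠ 0) :
    ∃ (p : ℕ) (_ : Fact p.Prime) (u : (ZMod p)ˣ), eval₂ (Int.castRingHom (ZMod p)) u x ≠ 0 := by
  obtain ⟨n, f, hf⟩ := x.exists_T_pow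
  have hf0 : f ≠ 0 := by
    rintro rfl
    rw [map_zero, eq_comm, (isUnit_T (n : ℤ)).mul_left_eq_zero] at hf
    exact hx hf
  obtain ⟨m, hm⟩ : ∃ m : ℤ, (Polynomial.X * f).eval m ≠ 0 := by
    by_contra! h
    exact mul_ne_zero Polynomial.X_ne_zero hf0 (Polynomial.funext (by simpa using h))
  obtain ⟨p, hp, hmp⟩ := exists_prime_intCast_ne_zero hm
  rw [Polynomial.eval_mul, Polynomial.eval_X, Int.cast_mul] at hmp
  refine ⟨p, hp, Units.mk0 m (left_ne_zero_of_mul hmp), fun h => right_ne_zero_of_mul hmp ?_⟩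
  have hev :=
    congrArg (eval₂ (Int.castRingHom (ZMod p)) (Units.mk0 _ (left_ne_zero_of_mul hmp))) hf
  rwa [map_mul, h, zero_mul, eval₂_toLaurent, Units.val_mk0, ← eq_intCast (Int.castRingHom _) m,
    Polynomial.eval₂_at_apply, eq_intCast] at hev

/-- The lamplighter group `ℤ ≀ ℤ`, whose base group `ℤ[T;T⁻¹]` is acted upon by powers of `T`. -/
abbrev Lamplighter : Type :=
  Multiplicative ℤ[T;T⁻¹] ⋊[(unitsMulAut ℤ[T;T⁻¹]).comp (AddMonoidAlgebra.of ℤ ℤ).toHomUnits]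
    Multiplicative ℤ

namespace Lamplighter

/-- The lamplighter group acts on `ℤ[T;T⁻¹]` by affine maps. -/
noncomputable def toAffineGroup : Lamplighter →* AffineGroup ℤ[T;T⁻¹] :=
  SemidirectProduct.map (MonoidHom.id _) (AddMonoidAlgebra.of ℤ ℤ).toHomUnits fun _ => rfl

theorem toAffineGroup_injective : Function.Injective toAffineGroup := fun _ _ hgh =>
  SemidirectProduct.ext (congrArg (·.left) hgh :) <|
    AddMonoidAlgebra.of_injective (R := ℤ) (congrArg (·.right.val) hgh)

instance : Group.ResiduallyFinite Lamplighter := by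
  have := AffineGroup.residuallyFinite (R := ℤ[T;T⁻¹]) fun x hx =>
    let ⟨p, _, u, hu⟩ := exists_prime_eval₂_ne_zero hx
    ⟨ZMod p, inferInstance, inferInstance, eval₂ (Int.castRingHom (ZMod p)) u, hu⟩
  exact Group.residuallyFinite_iff_forall_finiteIndex.mpr fun g hg =>
    (map_eq_one_iff _ toAffineGroup_injective).mp (map_eq_one_of_forall_finiteIndex_mem _ hg)

end Lamplighter

open scoped IsMulCommutative in
/-- The homomorphism from the free abelian group `ℤ[ι]` sending the basis vector `i` to `a i`. -/
noncomputable def commLift {ι G : Type*} [Group G] {a : ι → G}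
    (ha : ∀ i j, Commute (a i) (a j)) : Multiplicative (AddMonoidAlgebra ℤ ι) →* G :=
  have : IsMulCommutative (Subgroup.closure (Set.range a)) :=
    Subgroup.isMulCommutative_closure (by rintro _ ⟨i, rfl⟩ _ ⟨j, rfl⟩; exact ha i j)
  let e : (ι →₀ ℤ) →+ Additive (Subgroup.closure (Set.range a)) := Finsupp.liftAddHom fun i =>
    zmultiplesHom _ (.ofMul ⟨a i, Subgroup.subset_closure (Set.mem_range_self i)⟩)
  (Subgroup.closure (Set.range a)).subtype.comp <|
    (e.comp AddMonoidAlgebra.coeffAddEquiv.toAddMonoidHom).toMultiplicativeLeft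

theorem commLift_single {ι G : Type*} [Group G] {a : ι → G} (ha : ∀ i j, Commute (a i) (a j))
    (i : ι) (n : ℤ) : commLift ha (.ofAdd (.single i n)) = a i ^ n := by
  simp [commLift, AddMonoidAlgebra.coeffAddEquiv]

variable {d : ℤ → ℤ} {G : Type*} [Group G] {t : G} {a : ℤ → G}

theorem commLift_T_mul (h : IsHallTriple d t a 1) (k : ℤ) (x : ℤ[T;T⁻¹]) :
    commLift h.commute (.ofAdd (T k * x)) = t ^ k * commLift h.commute (.ofAdd x) * (t ^ k)⁻¹ := by
  induction x using LaurentPolynomial.induction_on' with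
  | add x y hx hy =>
    rw [mul_add, ofAdd_add, ofAdd_add, MonoidHom.map_mul, MonoidHom.map_mul, hx, hy, conj_mul]
  | C_mul_T i n =>
    rw [← single_eq_C_mul_T, T, AddMonoidAlgebra.single_mul_single, commLift_single,
      commLift_single, one_mul, ← conj_zpow, add_comm, (h.semiconjBy_zpow k i).eq,
      mul_inv_cancel_right]

/-- The homomorphism to a group with a Hall triple whose central element is trivial. -/
noncomputable def Lamplighter.lift (h : IsHallTriple d t a 1) : Lamplighter →* G :=
  SemidirectProduct.lift (commLift h.commute) (zpowersHom G t) fun k =>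
    MonoidHom.ext fun x => commLift_T_mul h k.toAdd x.toAdd

theorem Lamplighter.isHallTriple (d : ℤ → ℤ) :
    IsHallTriple d (.inr (.ofAdd 1) : Lamplighter) (fun i => .inl (.ofAdd (T i))) (.inl 1) := by
  refine .semidirectProduct (fun i => ?_) (map_one _) (fun _ => .one_left _) fun i j => ?_
  · exact congrArg Multiplicative.ofAdd ((T_add 1 i).symm.trans (congrArg T (add_comm 1 i)))
  · rw [one_zpow, pcomm_eq_one_iff]
    exact .all _ _

/-- The quotient map killing `c₁`. -/
noncomputable def toLamplighter (hd1 : d 1 = 1) : Gd d →* Lamplighter :=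
  HallGroup.lift hd1 (Lamplighter.isHallTriple d)

theorem mem_zpowers_of_toLamplighter_eq_one {hd1 : d 1 = 1} {g : Gd d}
    (hg : toLamplighter hd1 g = 1) : g ∈ Subgroup.zpowers (c d) := by
  have hc : QuotientGroup.mk' (Subgroup.zpowers (c d)) (c d) = 1 :=
    (QuotientGroup.eq_one_iff _).mpr (Subgroup.mem_zpowers _)
  have h := (isHallTriple d).map (QuotientGroup.mk' (Subgroup.zpowers (c d)))
  rw [hc] at h
  have hcomp : (Lamplighter.lift h).comp (toLamplighter hd1) = QuotientGroup.mk' _ := by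
    refine hom_ext ?_ (fun i => ?_) ?_
    · simp [toLamplighter, Lamplighter.lift]
    · simpa [toLamplighter, Lamplighter.lift] using
        (commLift_single h.commute i 1).trans (zpow_one _)
    · simp [toLamplighter, hc]
  rw [← QuotientGroup.eq_one_iff, ← QuotientGroup.mk'_apply, ← hcomp, MonoidHom.comp_apply, hg,
    map_one]

end Lamplighter

section Main

theorem exists_zmod_lift_of_periodic {α : Type*} {f : ℤ → α} {P : ℕ}
    (hf : Function.Periodic f P) : ∃ b : ZMod P → α, ∀ i : ℤ, b i = f i := by
  refine ⟨fun z => f z.cast, fun i => (congrArg f ?_).trans (hf.sub_int_mul_eq (i / P))⟩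
  rw [ZMod.coe_intCast, Int.emod_def, mul_comm, Int.cast_id]

variable {d : ℤ → ℤ}

theorem mul_two_eq_zero_of_lift_c_zpow_eq_one {I R : Type*} [AddCommGroupWithOne I]
    [CommRing R] (hd1 : d 1 = 1) (hanti : ∀ i, d (-i) = -d i) {b : I → R} (hb : ∀ i : ℤ, b i = d i)
    {z : ℤ} (hz : lift hd1 (isHallTriple_heisenberg hanti hb) (c d ^ z) = 1) : (z * 2 : R) = 0 := by
  rw [map_zpow, lift_c, ← map_zpow, map_eq_one_iff _ SemidirectProduct.inl_injective, ← map_zpow,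
    map_eq_one_iff _ Heisenberg.ofCenter_injective, ← ofAdd_zsmul, ofAdd_eq_one, zsmul_eq_mul] at hz
  exact hz

theorem eq_zero_of_c_zpow_eq_one (hd1 : d 1 = 1) (hanti : ∀ i, d (-i) = -d i) {z : ℤ}
    (hz : c d ^ z = 1) : z = 0 := by
  have h := mul_two_eq_zero_of_lift_c_zpow_eq_one hd1 hanti (I := ℤ) (b := d) (z := z)
    (fun _ => rfl) (by rw [hz, map_one])
  simpa using h

theorem exists_lt_periodic_modulus [Group.ResiduallyFinite (Gd d)] (hd1 : d 1 = 1)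
    (hanti : ∀ i, d (-i) = -d i) (n : ℕ) :
    ∃ q, n < q ∧ ∃ P : ℕ, 0 < P ∧ ∀ i : ℤ, (d (i + P) : ZMod q) = d i := by
  have hc : c d ^ n.factorial ≠ 1 := fun h => n.factorial_ne_zero <| by
    exact_mod_cast eq_zero_of_c_zpow_eq_one hd1 hanti ((zpow_natCast _ _).trans h)
  obtain ⟨N, hN⟩ := Group.exists_finiteIndexNormalSubgroup_notMem _ hc
  let π := QuotientGroup.mk' N.toSubgroup
  have hq : π (c d) ^ n.factorial ≠ 1 := by
    rwa [← map_pow, Ne, QuotientGroup.mk'_apply, QuotientGroup.eq_one_iff]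
  refine ⟨orderOf (π (c d)), ?_, orderOf (π (t d)), orderOf_pos _,
    ((isHallTriple d).map π).intCast_add_orderOf⟩
  contrapose! hq
  exact orderOf_dvd_iff_pow_eq_one.mp (Nat.dvd_factorial (orderOf_pos _) hq)

theorem dvd_mul_two_of_forall_finiteIndex_mem (hd1 : d 1 = 1) (hanti : ∀ i, d (-i) = -d i) {q P : ℕ}
    [NeZero q] [NeZero P] (hper : ∀ i : ℤ, (d (i + P) : ZMod q) = d i) {z : ℤ}
    (hz : ∀ (N : Subgroup (Gd d)) [N.FiniteIndex], c d ^ z ∈ N) : (q : ℤ) ∣ z * 2 := by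
  obtain ⟨b, hb⟩ := exists_zmod_lift_of_periodic (f := fun i => (d i : ZMod q)) hper
  have h := mul_two_eq_zero_of_lift_c_zpow_eq_one hd1 hanti hb
    (map_eq_one_of_forall_finiteIndex_mem _ hz)
  rw [← ZMod.intCast_zmod_eq_zero_iff_dvd]
  exact_mod_cast h

theorem residuallyFinite_of_infinite (hd1 : d 1 = 1) (hanti : ∀ i, d (-i) = -d i)
    (hinf : {q : ℕ | 0 < q ∧ ∃ P : ℕ, 0 < P ∧
      ∀ i : ℤ, (d (i + P) : ZMod q) = d i}.Infinite) :
    Group.ResiduallyFinite (Gd d) := by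
  refine Group.residuallyFinite_iff_forall_finiteIndex.mpr fun g hg => ?_
  obtain ⟨z, rfl⟩ := mem_zpowers_of_toLamplighter_eq_one
    (map_eq_one_of_forall_finiteIndex_mem (toLamplighter hd1) hg)
  obtain ⟨q, ⟨hq, P, hP, hper⟩, hlt⟩ := hinf.exists_gt (z * 2).natAbs
  have : NeZero q := ⟨hq.ne'⟩
  have : NeZero P := ⟨hP.ne'⟩
  have hz : z * 2 = 0 := Int.eq_zero_of_dvd_of_natAbs_lt_natAbs
    (dvd_mul_two_of_forall_finiteIndex_mem hd1 hanti hper hg) hlt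
  obtain rfl : z = 0 := (mul_eq_zero_iff_right two_ne_zero).mp hz
  exact zpow_zero _

end Main

end HallGroup

/-- For `d : ℤ → ℤ` antisymmetric with `d 1 = 1`, the group `G_d` is
residually finite if and only if `d mod q` is periodic for infinitely many positive
integers `q`. -/
theorem stmt_5 (d : ℤ → ℤ) (hanti : ∀ i : ℤ, d (-i) = -d i) (hd1 : d 1 = 1) :
    (∀ g : Gd d, g ≠ 1 →
        ∃ N : Subgroup (Gd d), N.Normal ∧ N.FiniteIndex ∧ g ∉ N) ↔
      {q : ℕ | 0 < q ∧ ∃ P : ℕ, 0 < P ∧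
        ∀ i : ℤ, ((d (i + P) : ZMod q) = (d i : ZMod q))}.Infinite := by
  rw [← HallGroup.residuallyFinite_iff_exists_normal_finiteIndex]
  refine ⟨fun _ => Set.infinite_of_forall_exists_gt fun n => ?_,
    HallGroup.residuallyFinite_of_infinite hd1 hanti⟩
  obtain ⟨q, hq, hper⟩ := HallGroup.exists_lt_periodic_modulus hd1 hanti n
  exact ⟨q, ⟨hq.pos, hper⟩, hq⟩
end
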